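/- arXiv:1708.07579 — 4 statements merged into one kernel-verified Lean document; each statement's English description precedes it below -/
import Mathlib

section
/- In the Maker-Breaker game on the edge set of K_n where Maker's goal is to claim all edges of some Hamiltonian cycle, if Maker (moving second) has a winning strategy on K_n, then Maker (moving second) also has a winning strategy on K_{n+2}. -/
/-- `MakerWins X F t M B` : in the Maker-Breaker positional game on board `X` with
winning sets `F`, from the position where Maker has claimed the elements of `M`,
Breaker has claimed the elements of `B`, and it is Maker's turn iff `t = true`,
Maker has a winning strategy (he can ensure to claim all elements of some winning set). -/
inductive MakerWins {α : Type} [DecidableEq α] (X : Finset α) (F : Set (Finset α)) :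
    Bool → Finset α → Finset α → Prop
  | claim {t : Bool} {M B : Finset α} (A : Finset α) (hA : A ∈ F) (hAM : A ⊆ M) :
      MakerWins X F t M B
  | makerMove {M B : Finset α} (e : α) (he : e ∈ X) (heM : e ∉ M) (heB : e ∉ B)
      (h : MakerWins X F false (insert e M) B) : MakerWins X F true M B
  | breakerMove {M B : Finset α} (e : α) (he : e ∈ X) (heM : e ∉ M) (heB : e ∉ B)
      (h : ∀ f ∈ X, f ∉ M → f ∉ B → MakerWins X F true M (insert f B)) :
      MakerWins X F false M B

/-- Maker, moving first, has a winning strategy in the game `(X, F)`. -/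
def MakerWinsFirst {α : Type} [DecidableEq α] (X : Finset α) (F : Set (Finset α)) : Prop :=
  MakerWins X F true ∅ ∅

/-- Maker, moving second (Breaker moves first), has a winning strategy in `(X, F)`. -/
def MakerWinsSecond {α : Type} [DecidableEq α] (X : Finset α) (F : Set (Finset α)) : Prop :=
  MakerWins X F false ∅ ∅

/-- The board of games played on the edge set of the complete graph `K_n`. -/
def Board (n : ℕ) : Finset (Sym2 (Fin n)) := (⊤ : SimpleGraph (Fin n)).edgeFinset

/-- Edge sets of Hamiltonian cycles of `K_n`: the winning sets of the Hamiltonicity game. -/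
def HamCycles (n : ℕ) : Set (Finset (Sym2 (Fin n))) :=
  {H | ∃ (a : Fin n) (p : (⊤ : SimpleGraph (Fin n)).Walk a a),
    p.IsHamiltonianCycle ∧ H = p.edges.toFinset}

/-- Edge sets of Hamiltonian paths of `K_n`: the winning sets of the Hamiltonian Path game. -/
def HamPaths (n : ℕ) : Set (Finset (Sym2 (Fin n))) :=
  {H | ∃ (a b : Fin n) (p : (⊤ : SimpleGraph (Fin n)).Walk a b),
    p.IsHamiltonian ∧ H = p.edges.toFinset}

/-- Edge sets of Hamiltonian paths of `K_n` with endpoints `u` and `v`: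
the winning sets of the Fixed Hamiltonian Path game. -/
def FixedHamPaths (n : ℕ) (u v : Fin n) : Set (Finset (Sym2 (Fin n))) :=
  {H | ∃ p : (⊤ : SimpleGraph (Fin n)).Walk u v, p.IsHamiltonian ∧ H = p.edges.toFinset}


theorem mw_final {α : Type} [DecidableEq α] {X : Finset α} {F : Set (Finset α)} {t : Bool}
    {M B : Finset α} (h : MakerWins X F t M B) : ∃ A ∈ F, A ⊆ M ∪ (X \ B) := by
  induction h with
  | claim A hA hAM => exact ⟨A, hA, hAM.trans Finset.subset_union_left⟩
  | makerMove e he heM heB h ih =>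
    obtain ⟨A, hA, hs⟩ := ih
    refine ⟨A, hA, fun x hx => ?_⟩
    have := hs hx
    grind
  | breakerMove e he heM heB h ih =>
    obtain ⟨A, hA, hs⟩ := ih e he heM heB
    refine ⟨A, hA, fun x hx => ?_⟩
    have := hs hx
    grind

theorem mw_resp {α : Type} [DecidableEq α] {X : Finset α} {F : Set (Finset α)}
    {M B : Finset α} (h : MakerWins X F false M B) (f : α) (hf : f ∈ X) (hfM : f ∉ M)
    (hfB : f ∉ B) : MakerWins X F false M (insert f B) ∨
      ∃ e ∈ X, e ∉ M ∧ e ∉ insert f B ∧ MakerWins X F false (insert e M) (insert f B) := by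
  cases h with
  | claim A hA hAM => exact Or.inl (.claim A hA hAM)
  | breakerMove e he heM heB h =>
    cases h f hf hfM hfB with
    | claim A hA hAM => exact Or.inl (.claim A hA hAM)
    | makerMove e he heM heB h => exact Or.inr ⟨e, he, heM, heB, h⟩

theorem mw_mono {α : Type} [DecidableEq α] {X : Finset α} {F : Set (Finset α)} (k : ℕ) :
    ∀ {M M' B : Finset α}, (X \ (M' ∪ B)).card ≤ k → M ⊆ M' → MakerWins X F false M B →
      MakerWins X F false M' B ∧ MakerWins X F true M' B := by
  induction k with
  | zero =>
    intro M M' B hk hM h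
    obtain ⟨A, hA, hs⟩ := mw_final h
    have h0 : X \ (M' ∪ B) = ∅ := by simpa using hk
    have : A ⊆ M' := by
      intro x hx
      have h1 := hs hx
      have h2 : x ∉ X \ (M' ∪ B) := by simp [h0]
      grind
    exact ⟨.claim A hA this, .claim A hA this⟩
  | succ k ih =>
    intro M M' B hk hM h
    by_cases h0 : X \ (M' ∪ B) = ∅
    · exact ih (by simp [h0]) hM h
    obtain ⟨e, he⟩ := Finset.nonempty_iff_ne_empty.mpr h0
    have key : ∀ f ∈ X, f ∉ M' → f ∉ B → ∀ N C : Finset α, M' ⊆ N → B ⊆ C →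
        f ∈ N ∪ C → (X \ (N ∪ C)).card ≤ k := by
      intro f hf hfM hfB N C hN hC hfN
      have : X \ (N ∪ C) ⊂ X \ (M' ∪ B) := by
        rw [Finset.ssubset_iff_of_subset]
        · exact ⟨f, by grind, by grind⟩
        · intro x hx; grind
      have := Finset.card_lt_card this
      omega
    have he' : e ∈ X ∧ e ∉ M' ∧ e ∉ B := by grind
    obtain ⟨heX, heM, heB⟩ := he'
    constructor
    · refine .breakerMove e heX heM heB fun f hf hfM hfB => ?_
      have hc := key f hf hfM hfB
      rcases mw_resp h f hf (fun h => hfM (hM h)) hfB with h1 | ⟨g, hg, hgM, hgB, h1⟩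
      · exact (ih (hc _ _ subset_rfl (Finset.subset_insert _ _) (by simp)) hM h1).2
      · by_cases hgM' : g ∈ M'
        · exact (ih (hc _ _ subset_rfl (Finset.subset_insert _ _) (by simp))
            (Finset.insert_subset hgM' hM) h1).2
        · exact .makerMove g hg hgM' hgB
            (ih (hc _ _ (Finset.subset_insert _ _) (Finset.subset_insert _ _) (by simp))
            (Finset.insert_subset_insert _ hM) h1).1
    · exact .makerMove e heX heM heB
        (ih (key e heX heM heB _ _ (Finset.subset_insert _ _) subset_rfl (by simp))
          (hM.trans (Finset.subset_insert _ _)) h).1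

theorem mw_pass {α : Type} [DecidableEq α] {X : Finset α} {F : Set (Finset α)}
    {M B : Finset α} (h : MakerWins X F false M B) : MakerWins X F true M B :=
  (mw_mono _ le_rfl subset_rfl h).2

theorem mw_card {α : Type} [DecidableEq α] {X : Finset α} {F : Set (Finset α)} {t : Bool}
    {M B : Finset α} (h : MakerWins X F t M B) (hM : M ⊆ X) (hB : B ⊆ X) (hd : Disjoint M B)
    (hc : B.card = M.card + t.toNat) : ∃ A ∈ F, 2 * A.card ≤ X.card := by
  induction h with
  | claim A hA hAM =>
    refine ⟨A, hA, ?_⟩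
    have h1 := Finset.card_le_card hAM
    have h2 := Finset.card_le_card (Finset.union_subset hM hB)
    rw [Finset.card_union_of_disjoint hd] at h2
    omega
  | makerMove e he heM heB h ih =>
    refine ih (Finset.insert_subset he hM) hB (by simp [heB, hd]) ?_
    simp [heM, hc]
  | breakerMove e he heM heB h ih =>
    refine ih e he heM heB hM (Finset.insert_subset he hB) (by simp [heM, hd]) ?_
    simp [heB, hc]

theorem mw_comp {α α₁ α₂ : Type} [DecidableEq α] [DecidableEq α₁] [DecidableEq α₂]
    {X : Finset α} {X₁ : Finset α₁} {X₂ : Finset α₂}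
    {F : Set (Finset α)} {F₁ : Set (Finset α₁)} {F₂ : Set (Finset α₂)}
    (o : α) (i : α₁ → α) (j : α₂ → α) (hi : Function.Injective i) (hj : Function.Injective j)
    (hij : ∀ a b, i a ≠ j b) (hio : ∀ a, i a ≠ o) (hjo : ∀ b, j b ≠ o)
    (hX : ∀ f, f ∈ X ↔ f = o ∨ (∃ a ∈ X₁, i a = f) ∨ ∃ b ∈ X₂, j b = f)
    (hF : ∀ A₁ ∈ F₁, ∀ A₂ ∈ F₂, ∃ A ∈ F, A ⊆ insert o (A₁.image i ∪ A₂.image j)) (k : ℕ) :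
    ∀ {M₁ B₁ : Finset α₁} {M₂ B₂ : Finset α₂},
      (X \ (insert o (M₁.image i ∪ M₂.image j) ∪ (B₁.image i ∪ B₂.image j))).card ≤ k →
      MakerWins X₁ F₁ false M₁ B₁ → MakerWins X₂ F₂ false M₂ B₂ →
      MakerWins X F false (insert o (M₁.image i ∪ M₂.image j)) (B₁.image i ∪ B₂.image j) := by
  have hmi : ∀ (S : Finset α₁) a, i a ∈ S.image i ↔ a ∈ S := fun S a => by
    simp [hi.eq_iff]
  have hmj : ∀ (S : Finset α₂) a, j a ∈ S.image j ↔ a ∈ S := fun S a => by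
    simp [hj.eq_iff]
  have hmij : ∀ (S : Finset α₂) a, i a ∉ S.image j := fun S a => by
    simp only [Finset.mem_image, not_exists, not_and]
    exact fun b _ h => hij a b h.symm
  have hmji : ∀ (S : Finset α₁) a, j a ∉ S.image i := fun S a => by
    simp only [Finset.mem_image, not_exists, not_and]
    exact fun b _ h => hij b a h
  induction k using Nat.strong_induction_on with
  | _ k ih =>
  intro M₁ B₁ M₂ B₂ hk h1 h2
  set M := insert o (M₁.image i ∪ M₂.image j) with hMdef
  set B := B₁.image i ∪ B₂.image j with hBdef
  have key : ∀ f ∈ X, f ∉ M → f ∉ B → ∀ N C : Finset α, M ⊆ N → B ⊆ C →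
      f ∈ N ∪ C → (X \ (N ∪ C)).card < k := by
    intro f hf hfM hfB N C hN hC hfN
    have : X \ (N ∪ C) ⊂ X \ (M ∪ B) := by
      rw [Finset.ssubset_iff_of_subset]
      · exact ⟨f, by grind, by grind⟩
      · intro x hx; grind
    have := Finset.card_lt_card this
    omega
  have iM : ∀ a, i a ∈ M ↔ a ∈ M₁ := fun a => by
    rw [hMdef, Finset.mem_insert, Finset.mem_union, hmi]
    simp only [hio a, hmij M₂ a, false_or, or_false]
  have jM : ∀ a, j a ∈ M ↔ a ∈ M₂ := fun a => by
    rw [hMdef, Finset.mem_insert, Finset.mem_union, hmj]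
    simp only [hjo a, hmji M₁ a, false_or]
  have iB : ∀ a, i a ∈ B ↔ a ∈ B₁ := fun a => by
    rw [hBdef, Finset.mem_union, hmi]
    simp only [hmij B₂ a, or_false]
  have jB : ∀ a, j a ∈ B ↔ a ∈ B₂ := fun a => by
    rw [hBdef, Finset.mem_union, hmj]
    simp only [hmji B₁ a, false_or]
  have main : ∀ e ∈ X, e ∉ M → e ∉ B → MakerWins X F false M B := by
    intro e he heM heB
    refine .breakerMove e he heM heB fun f hf hfM hfB => ?_
    have hc := key f hf hfM hfB
    rcases (hX f).1 hf with rfl | ⟨a, ha, rfl⟩ | ⟨b, hb, rfl⟩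
    · exact absurd (by simp [hMdef]) hfM
    · rw [iM] at hfM
      rw [iB] at hfB
      have eB : insert (i a) B = (insert a B₁).image i ∪ B₂.image j := by
        simp [hBdef, Finset.image_insert, Finset.insert_union]
      rcases mw_resp h1 a ha hfM hfB with h | ⟨g, hg, hgM, hgB, h⟩
      · apply mw_pass
        rw [eB]
        refine ih _ ?_ le_rfl h h2
        rw [← eB]
        exact hc _ _ subset_rfl (Finset.subset_insert _ _) (by simp)
      · have eM : insert (i g) M = insert o ((insert g M₁).image i ∪ M₂.image j) := by
          rw [hMdef, Finset.image_insert, Finset.insert_union, Finset.insert_comm]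
        refine .makerMove (i g) ((hX _).2 (Or.inr (Or.inl ⟨g, hg, rfl⟩))) (by rwa [iM]) ?_ ?_
        · rw [Finset.mem_insert, iB, hi.eq_iff]
          simpa using hgB
        rw [eB, eM]
        refine ih _ ?_ le_rfl h h2
        rw [← eB, ← eM]
        exact hc _ _ (Finset.subset_insert _ _) (Finset.subset_insert _ _) (by simp)
    · rw [jM] at hfM
      rw [jB] at hfB
      have eB : insert (j b) B = B₁.image i ∪ (insert b B₂).image j := by
        simp [hBdef, Finset.image_insert, Finset.union_insert]
      rcases mw_resp h2 b hb hfM hfB with h | ⟨g, hg, hgM, hgB, h⟩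
      · apply mw_pass
        rw [eB]
        refine ih _ ?_ le_rfl h1 h
        rw [← eB]
        exact hc _ _ subset_rfl (Finset.subset_insert _ _) (by simp)
      · have eM : insert (j g) M = insert o (M₁.image i ∪ (insert g M₂).image j) := by
          rw [hMdef, Finset.image_insert, Finset.union_insert, Finset.insert_comm]
        refine .makerMove (j g) ((hX _).2 (Or.inr (Or.inr ⟨g, hg, rfl⟩))) (by rwa [jM]) ?_ ?_
        · rw [Finset.mem_insert, jB, hj.eq_iff]
          simpa using hgB
        rw [eB, eM]
        refine ih _ ?_ le_rfl h1 h
        rw [← eB, ← eM]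
        exact hc _ _ (Finset.subset_insert _ _) (Finset.subset_insert _ _) (by simp)
  cases h1 with
  | breakerMove e he heM heB h =>
    exact main (i e) ((hX _).2 (Or.inr (Or.inl ⟨e, he, rfl⟩))) (by rwa [iM]) (by rwa [iB])
  | claim A₁ hA₁ hAM₁ =>
  cases h2 with
  | breakerMove e he heM heB h =>
    exact main (j e) ((hX _).2 (Or.inr (Or.inr ⟨e, he, rfl⟩))) (by rwa [jM]) (by rwa [jB])
  | claim A₂ hA₂ hAM₂ =>
    obtain ⟨A, hA, hs⟩ := hF A₁ hA₁ A₂ hA₂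
    refine .claim A hA (hs.trans ?_)
    exact Finset.insert_subset_insert _
      (Finset.union_subset_union (Finset.image_subset_image hAM₁) (Finset.image_subset_image hAM₂))

/-- First sufficient criterion for the side game. -/
def Crit1 {n : ℕ} (A : Finset (Fin n × Bool)) : Prop :=
  ∃ d, (∀ x, x ≠ d → (x, true) ∈ A ∨ (x, false) ∈ A) ∧ (∃ x, (x, true) ∈ A) ∧ ∃ x, (x, false) ∈ A

/-- Second sufficient criterion for the side game. -/
def Crit2 {n : ℕ} (A : Finset (Fin n × Bool)) : Prop :=
  ∃ d d', d ≠ d' ∧ (∀ x, x ≠ d → x ≠ d' → (x, true) ∈ A ∨ (x, false) ∈ A) ∧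
    (∃ x y, x ≠ y ∧ x ≠ d ∧ x ≠ d' ∧ y ≠ d ∧ y ≠ d' ∧ (x, true) ∈ A ∧ (y, true) ∈ A) ∧
    (∃ x y, x ≠ y ∧ x ≠ d ∧ x ≠ d' ∧ y ≠ d ∧ y ≠ d' ∧ (x, false) ∈ A ∧ (y, false) ∈ A)

/-- Winning sets of the side game. -/
def SideF (n : ℕ) : Set (Finset (Fin n × Bool)) := {A | Crit1 A ∨ Crit2 A}

theorem mw_pairing {α : Type} [DecidableEq α] {X : Finset α} {F : Set (Finset α)}
    (r : α → α → Prop) (hr : ∀ x y, r x y → y ∈ X ∧ x ∈ X ∧ x ≠ y ∧ r y x)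
    (hr' : ∀ x y z, r x y → r x z → y = z) (k : ℕ) :
    ∀ {M B : Finset α}, (X \ (M ∪ B)).card ≤ k →
    (∀ x y, r x y → x ∈ M ∨ y ∈ M ∨ (x ∉ B ∧ y ∉ B)) →
    (∀ A, M ⊆ A → (∀ x y, r x y → x ∈ A ∨ y ∈ A) → A ∈ F) →
    MakerWins X F false M B := by
  induction k using Nat.strong_induction_on with
  | _ k ih =>
  intro M B hk h1 h2
  by_cases h0 : X \ (M ∪ B) = ∅
  · refine .claim M (h2 M subset_rfl fun x y hxy => ?_) subset_rfl
    have := hr x y hxy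
    have h3 : x ∉ X \ (M ∪ B) := by simp [h0]
    have := h1 x y hxy
    grind
  obtain ⟨e, he⟩ := Finset.nonempty_iff_ne_empty.mpr h0
  have key : ∀ f ∈ X, f ∉ M → f ∉ B → ∀ N C : Finset α, M ⊆ N → B ⊆ C →
      f ∈ N ∪ C → (X \ (N ∪ C)).card < k := by
    intro f hf hfM hfB N C hN hC hfN
    have : X \ (N ∪ C) ⊂ X \ (M ∪ B) := by
      rw [Finset.ssubset_iff_of_subset]
      · exact ⟨f, by grind, by grind⟩
      · intro x hx; grind
    have := Finset.card_lt_card this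
    omega
  refine .breakerMove e (by grind) (by grind) (by grind) fun f hf hfM hfB => ?_
  have hc := key f hf hfM hfB
  by_cases hp : ∃ g, r f g ∧ g ∉ M
  · obtain ⟨g, hg, hgM⟩ := hp
    obtain ⟨hgX, -, hne, hsy⟩ := hr f g hg
    have := h1 f g hg
    refine .makerMove g hgX hgM (by grind) (ih _ (hc _ _ (Finset.subset_insert _ _)
      (Finset.subset_insert _ _) (by simp)) le_rfl ?_ ?_)
    · intro x y hxy
      have h3 := h1 x y hxy
      have h4 := hr x y hxy
      have h5 : x = f → y = g := by rintro rfl; exact hr' _ _ _ hxy hg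
      have h6 : y = f → x = g := by rintro rfl; exact hr' _ _ _ h4.2.2.2 hg
      grind
    · exact fun A hA => h2 A ((Finset.subset_insert _ _).trans hA)
  · push Not at hp
    refine mw_pass (ih _ (hc _ _ subset_rfl
      (Finset.subset_insert _ _) (by simp)) le_rfl ?_ h2)
    intro x y hxy
    have h3 := h1 x y hxy
    have h4 := hr x y hxy
    have h5 : x = f → y ∈ M := by rintro rfl; exact hp _ hxy
    have h6 : y = f → x ∈ M := by rintro rfl; exact hp _ h4.2.2.2
    grind

theorem mw_side_pairing {n : ℕ} (Z : Finset (Fin n)) (a b : Fin n × Bool)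
    {M B : Finset (Fin n × Bool)} (ha : a.1 ∈ Z) (hb : b.1 ∈ Z) (hab : a ≠ b)
    (hfree : ∀ x s, (x, s) ∈ B → x ∈ Z) (hs : a ∈ M ∨ b ∈ M ∨ (a ∉ B ∧ b ∉ B))
    (hW : ∀ A, M ⊆ A → (a ∈ A ∨ b ∈ A) → (∀ x ∉ Z, (x, true) ∈ A ∨ (x, false) ∈ A) →
      Crit1 A ∨ Crit2 A) :
    MakerWins Finset.univ (SideF n) false M B := by
  refine mw_pairing (fun p q => (p.1 = q.1 ∧ p.2 ≠ q.2 ∧ p.1 ∉ Z) ∨ (p = a ∧ q = b) ∨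
    (p = b ∧ q = a)) ?_ ?_ _ le_rfl ?_ ?_
  · rintro ⟨x, s⟩ ⟨y, t⟩ h
    grind
  · rintro ⟨x, s⟩ ⟨y, t⟩ ⟨z, r⟩ h h'
    cases s <;> cases t <;> cases r <;> grind
  · rintro ⟨x, s⟩ ⟨y, t⟩ h
    grind
  · intro A hA h
    refine hW A hA (h a b (by simp)) fun x hx => h (x, true) (x, false) ?_
    simp [hx]

theorem mw_step {α : Type} [DecidableEq α] {X : Finset α} {F : Set (Finset α)}
    {M B : Finset α} (e : α) (he : e ∈ X) (heM : e ∉ M) (heB : e ∉ B)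
    (h : ∀ f ∈ X, f ∉ M → f ∉ B → ∃ g ∈ X, g ∉ M ∧ g ∉ insert f B ∧
      MakerWins X F false (insert g M) (insert f B)) : MakerWins X F false M B := by
  refine .breakerMove e he heM heB fun f hf hfM hfB => ?_
  obtain ⟨g, hg, hgM, hgB, hw⟩ := h f hf hfM hfB
  exact .makerMove g hg hgM hgB hw

theorem fresh {n : ℕ} (hn : 5 ≤ n) (Z : Finset (Fin n)) (hZ : Z.card < 5) : ∃ x, x ∉ Z := by
  by_contra! h
  have : Z = Finset.univ := Finset.eq_univ_iff_forall.mpr h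
  rw [this, Finset.card_univ, Fintype.card_fin] at hZ
  omega

/-- State E of the side game. -/
theorem side_E {n : ℕ} (hn : 5 ≤ n) (w x1 x2 x3 : Fin n) (h1 : x1 ≠ w) (h2 : x2 ≠ w)
    (h21 : x2 ≠ x1) (h3 : x3 ≠ w) (h31 : x3 ≠ x1) (h32 : x3 ≠ x2) :
    MakerWins Finset.univ (SideF n) false {(x3, true), (x1, false)}
      {(x2, true), (w, false), (w, true)} := by
  refine mw_step (x2, false) (by simp) (by grind) (by grind) ?_
  rintro ⟨y, s⟩ - hM hB
  by_cases hy2 : y = x2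
  · obtain ⟨x4, hx4⟩ := fresh hn {w, x1, x2, x3} (Finset.card_le_four.trans_lt (by norm_num))
    simp only [Finset.mem_insert, Finset.mem_singleton, not_or] at hx4
    refine ⟨(x4, false), by simp, by grind, by grind, ?_⟩
    refine mw_side_pairing {w, x1, x2, x3, x4} (x1, true) (x4, true) (by simp) (by simp)
      (by grind) (by grind)
      (by simp only [Finset.mem_insert, Finset.mem_singleton, Prod.mk.injEq]; grind) ?_
    intro A hA hab hall
    simp only [Finset.mem_insert, Finset.mem_singleton, not_or, Finset.insert_subset_iff,
      Finset.singleton_subset_iff] at hall hA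
    refine Or.inr ⟨w, x2, h2.symm, ?_, ?_, ⟨x1, x4, by grind⟩⟩
    · grind
    · rcases hab with h | h
      · exact ⟨x3, x1, by grind⟩
      · exact ⟨x3, x4, by grind⟩
  by_cases hy1 : y = x1 ∨ y = x3
  · refine ⟨(x2, false), by simp, by grind, by grind, ?_⟩
    refine mw_side_pairing {w, x1, x2, x3} (x2, false) (x1, true) (by simp) (by simp)
      (by grind) (by grind)
      (by simp only [Finset.mem_insert, Finset.mem_singleton, Prod.mk.injEq]; grind) ?_
    intro A hA hab hall
    simp only [Finset.mem_insert, Finset.mem_singleton, not_or, Finset.insert_subset_iff,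
      Finset.singleton_subset_iff] at hall hA
    refine Or.inl ⟨w, ?_, ⟨x3, by grind⟩, ⟨x1, by grind⟩⟩
    grind
  have hyw : y ≠ w := by cases s <;> grind
  cases s
  · refine ⟨(y, true), by simp, by grind, by grind, ?_⟩
    refine mw_side_pairing {w, x1, x2, x3, y} (x2, false) (x3, false) (by simp) (by simp)
      (by grind) (by grind)
      (by simp only [Finset.mem_insert, Finset.mem_singleton, Prod.mk.injEq]; grind) ?_
    intro A hA hab hall
    simp only [Finset.mem_insert, Finset.mem_singleton, not_or, Finset.insert_subset_iff,
      Finset.singleton_subset_iff] at hall hA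
    rcases hab with h | h
    · refine Or.inl ⟨w, ?_, ⟨x3, by grind⟩, ⟨x1, by grind⟩⟩
      grind
    · refine Or.inr ⟨w, x2, h2.symm, ?_, ⟨x3, y, by grind⟩, ⟨x1, x3, by grind⟩⟩
      grind
  · refine ⟨(y, false), by simp, by grind, by grind, ?_⟩
    refine mw_side_pairing {w, x1, x2, x3, y} (x2, false) (x1, true) (by simp) (by simp)
      (by grind) (by grind)
      (by simp only [Finset.mem_insert, Finset.mem_singleton, Prod.mk.injEq]; grind) ?_
    intro A hA hab hall
    simp only [Finset.mem_insert, Finset.mem_singleton, not_or, Finset.insert_subset_iff,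
      Finset.singleton_subset_iff] at hall hA
    rcases hab with h | h
    · refine Or.inl ⟨w, ?_, ⟨x3, by grind⟩, ⟨x1, by grind⟩⟩
      grind
    · refine Or.inr ⟨w, x2, h2.symm, ?_, ⟨x3, x1, by grind⟩, ⟨x1, y, by grind⟩⟩
      grind

/-- State D of the side game. -/
theorem side_D {n : ℕ} (hn : 5 ≤ n) (w x1 : Fin n) (h1 : x1 ≠ w) :
    MakerWins Finset.univ (SideF n) false {(x1, false)} {(w, false), (w, true)} := by
  refine mw_step (x1, true) (by simp) (by grind) (by grind) ?_
  rintro ⟨y, s⟩ - hM hB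
  have hyw : y ≠ w := by cases s <;> grind
  by_cases hy1 : y = x1
  · obtain ⟨x2, hx2⟩ := fresh hn {w, x1} (Finset.card_le_two.trans_lt (by norm_num))
    simp only [Finset.mem_insert, Finset.mem_singleton, not_or] at hx2
    refine ⟨(x2, true), by simp, by grind, by grind, ?_⟩
    refine mw_side_pairing {w, x1, x2} (x1, false) (x2, true) (by simp) (by simp)
      (by grind) (by grind) (by grind) ?_
    intro A hA hab hall
    refine Or.inl ⟨w, ?_, ⟨x2, by grind⟩, ⟨x1, by grind⟩⟩
    grind
  cases s
  · refine ⟨(y, true), by simp, by grind, by grind, ?_⟩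
    refine mw_side_pairing {w, x1, y} (x1, false) (y, true) (by simp) (by simp)
      (by grind) (by grind) (by grind) ?_
    intro A hA hab hall
    refine Or.inl ⟨w, ?_, ⟨y, by grind⟩, ⟨x1, by grind⟩⟩
    grind
  · obtain ⟨x3, hx3⟩ := fresh hn {w, x1, y} (Finset.card_le_three.trans_lt (by norm_num))
    simp only [Finset.mem_insert, Finset.mem_singleton, not_or] at hx3
    refine ⟨(x3, true), by simp, by grind, by grind, ?_⟩
    exact side_E hn w x1 y x3 h1 hyw hy1 hx3.1 hx3.2.1 hx3.2.2

/-- The side game after Breaker has claimed one edge and Maker the edge joining the two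
special vertices. -/
theorem side_A {n : ℕ} (hn : 5 ≤ n) (w : Fin n) :
    MakerWins Finset.univ (SideF n) false ∅ {(w, true)} := by
  refine mw_step (w, false) (by simp) (by grind) (by grind) ?_
  rintro ⟨y, s⟩ - hM hB
  by_cases hyw : y = w
  · subst hyw
    have : s = false := by cases s <;> grind
    subst this
    obtain ⟨x1, hx1⟩ := fresh hn {y} (by simp)
    simp only [Finset.mem_singleton] at hx1
    refine ⟨(x1, false), by simp, by grind, by grind, ?_⟩
    exact side_D hn y x1 hx1
  obtain ⟨x2, hx2⟩ := fresh hn {w, y} (Finset.card_le_two.trans_lt (by norm_num))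
  simp only [Finset.mem_insert, Finset.mem_singleton, not_or] at hx2
  cases s
  · refine ⟨(w, false), by simp, by grind, by grind, ?_⟩
    refine mw_side_pairing {w, y, x2} (y, true) (x2, true) (by simp) (by simp)
      (by grind) (by grind) (by grind) ?_
    intro A hA hab hall
    rcases hab with h | h
    · refine Or.inl ⟨x2, ?_, ⟨y, by grind⟩, ⟨w, by grind⟩⟩
      grind
    · refine Or.inl ⟨y, ?_, ⟨x2, by grind⟩, ⟨w, by grind⟩⟩
      grind
  · refine ⟨(x2, true), by simp, by grind, by grind, ?_⟩
    refine mw_side_pairing {w, y, x2} (w, false) (y, false) (by simp) (by simp)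
      (by grind) (by grind) (by grind) ?_
    intro A hA hab hall
    rcases hab with h | h
    · refine Or.inl ⟨y, ?_, ⟨x2, by grind⟩, ⟨w, by grind⟩⟩
      grind
    · refine Or.inl ⟨w, ?_, ⟨x2, by grind⟩, ⟨y, by grind⟩⟩
      grind

theorem chain_insert {V : Type} (R S : V → V → Prop) (N : List V)
    (hN : ∀ x y, R x y → ¬ S x y → ∃ N', N'.Perm N ∧ List.IsChain R (x :: (N' ++ [y]))) (d : V)
    (l : List V) : ∀ a, List.IsChain R (a :: (l ++ [d])) → List.IsChain S (a :: (l ++ [d])) ∨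
      ∃ l', l'.Perm (N ++ l) ∧ List.IsChain R (a :: (l' ++ [d])) := by
  induction l with
  | nil =>
    intro a h
    have hR : R a d := by simpa using h
    by_cases hS : S a d
    · left; simpa using hS
    · obtain ⟨N', hp, hc⟩ := hN a d hR hS
      exact Or.inr ⟨N', by simpa using hp, hc⟩
  | cons b l ih =>
    intro a h
    have h' : R a b ∧ List.IsChain R (b :: (l ++ [d])) := by simpa using h
    by_cases hS : S a b
    · rcases ih b h'.2 with h1 | ⟨l', hp, hc⟩
      · left
        simpa [hS] using h1
      · right
        refine ⟨b :: l', ?_, by simpa [h'.1] using hc⟩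
        exact (hp.cons b).trans List.perm_middle.symm
    · obtain ⟨N', hp, hc⟩ := hN a b h'.1 hS
      refine Or.inr ⟨N' ++ b :: l, hp.append_right _, ?_⟩
      have := (List.isChain_split (l₁ := a :: N') (c := b) (l₂ := l ++ [d]) (R := R)).2
        ⟨by simpa using hc, h'.2⟩
      simpa using this

/-- No two consecutive vertices are joined to the two different special vertices. -/
def NoBi {V : Type} (P Q : V → Prop) (x y : V) : Prop := ¬ (P x ∧ Q y) ∧ ¬ (Q x ∧ P y)

theorem pure_chain {V : Type} (P Q : V → Prop) (l : List V) : ∀ a b,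
    List.IsChain (NoBi P Q) (a :: b :: l) → (∀ x ∈ a :: b :: l, P x ∨ Q x) →
    (∀ x ∈ a :: b :: l, P x ∧ ¬ Q x) ∨ (∀ x ∈ a :: b :: l, Q x ∧ ¬ P x) := by
  induction l with
  | nil =>
    intro a b h hc
    have h' : NoBi P Q a b := by simpa using h
    unfold NoBi at h'
    have := hc a (by simp)
    have := hc b (by simp)
    simp only [List.mem_cons, List.not_mem_nil, or_false, forall_eq_or_imp, forall_eq]
    tauto
  | cons c l ih =>
    intro a b h hc
    rw [List.isChain_cons_cons] at h
    have h' := h.1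
    unfold NoBi at h'
    have h1 := hc a (by simp)
    rcases ih b c h.2 (fun x hx => hc x (List.mem_cons_of_mem _ hx)) with h2 | h2
    · left
      have := h2 b (by simp)
      intro x hx
      rcases List.mem_cons.1 hx with rfl | hx
      · tauto
      · exact h2 x hx
    · right
      have := h2 b (by simp)
      intro x hx
      rcases List.mem_cons.1 hx with rfl | hx
      · tauto
      · exact h2 x hx

theorem pure_chain' {V : Type} (P Q : V → Prop) (l : List V) (hl : 2 ≤ l.length)
    (h : List.IsChain (NoBi P Q) l) (hc : ∀ x ∈ l, P x ∨ Q x) :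
    (∀ x ∈ l, P x ∧ ¬ Q x) ∨ (∀ x ∈ l, Q x ∧ ¬ P x) := by
  match l, hl with
  | a :: b :: l, _ => exact pure_chain P Q l a b h hc

theorem bi_insert {V : Type} (R : V → V → Prop) (hR : ∀ x y, R x y → R y x) (u v : V)
    (huv : R u v) (d : V) (l : List V) (hch : List.IsChain R (d :: (l ++ [d]))) :
    List.IsChain (NoBi (R u) (R v)) (d :: (l ++ [d])) ∨
      ∃ l', l'.Perm (u :: v :: l) ∧ List.IsChain R (d :: (l' ++ [d])) := by
  refine chain_insert R (NoBi (R u) (R v)) [u, v] ?_ d l d hch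
  intro x y hxy hS
  by_cases h : R u x ∧ R v y
  · exact ⟨[u, v], List.Perm.refl _, by simp [hR _ _ h.1, huv, h.2]⟩
  · have h' : R v x ∧ R u y := by
      unfold NoBi at hS
      tauto
    exact ⟨[v, u], List.Perm.swap _ _ _, by simp [hR _ _ h'.1, hR _ _ huv, h'.2]⟩

theorem extend1 {V : Type} (R : V → V → Prop) (hR : ∀ x y, R x y → R y x) (u v : V)
    (huv : R u v) (d : V) (l : List V) (hch : List.IsChain R (d :: (l ++ [d])))
    (hlen : 4 ≤ l.length) (hcol : ∀ z ∈ l, R u z ∨ R v z) (hU : ∃ z ∈ d :: l, R u z)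
    (hV : ∃ z ∈ d :: l, R v z) :
    ∃ l', l'.Perm (u :: v :: l) ∧ List.IsChain R (d :: (l' ++ [d])) := by
  rcases bi_insert R hR u v huv d l hch with h | h
  swap
  · exact h
  exfalso
  match l, hlen with
  | b :: l, hlen =>
  have h0 : NoBi (R u) (R v) d b ∧ List.IsChain (NoBi (R u) (R v)) ((b :: l) ++ [d]) := by
    simpa using h
  have h1 := h0.2.left_of_append
  have hb := h0.1
  unfold NoBi at hb
  obtain ⟨x, hx, hUx⟩ := hU
  obtain ⟨y, hy, hVy⟩ := hV
  rcases pure_chain' _ _ _ (by omega) h1 hcol with h2 | h2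
  · have h3 := h2 b (by simp)
    rcases List.mem_cons.1 hy with rfl | hy
    · tauto
    · exact (h2 y hy).2 hVy
  · have h3 := h2 b (by simp)
    rcases List.mem_cons.1 hx with rfl | hx
    · tauto
    · exact (h2 x hx).2 hUx

theorem extend2_aux {V : Type} (R : V → V → Prop) (hR : ∀ x y, R x y → R y x) (u v : V)
    (d d' : V) (l₁ l₂ : List V)
    (hch : List.IsChain R (d :: ((l₁ ++ d' :: l₂) ++ [d])))
    (h1 : 2 ≤ l₁.length) (h2 : 2 ≤ l₂.length) (h3 : ∀ x ∈ l₁, R u x) (h4 : ∀ x ∈ l₂, R v x) :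
    ∃ l', l'.Perm (u :: v :: (l₁ ++ d' :: l₂)) ∧ List.IsChain R (d :: (l' ++ [d])) := by
  match l₁, h1, l₂, h2 with
  | a :: b :: l, _, a' :: b' :: l', _ =>
  refine ⟨(a :: u :: b :: l) ++ d' :: a' :: v :: b' :: l', ?_, ?_⟩
  · classical
    rw [List.perm_iff_count]
    intro z
    simp only [List.count_append, List.count_cons]
    omega
  · have ha := hR _ _ (h3 a (by simp))
    have hb := h3 b (by simp)
    have ha' := hR _ _ (h4 a' (by simp))
    have hb' := h4 b' (by simp)
    have e1 : d :: (((a :: b :: l) ++ d' :: a' :: b' :: l') ++ [d]) =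
      (d :: a :: b :: l) ++ d' :: (a' :: b' :: (l' ++ [d])) := by simp
    have e2 : d :: (((a :: u :: b :: l) ++ d' :: a' :: v :: b' :: l') ++ [d]) =
      (d :: a :: u :: b :: l) ++ d' :: (a' :: v :: b' :: (l' ++ [d])) := by simp
    rw [e1, List.isChain_split] at hch
    rw [e2, List.isChain_split]
    simp only [List.cons_append, List.isChain_cons_cons] at hch ⊢
    tauto

theorem extend2 {V : Type} (R : V → V → Prop) (hR : ∀ x y, R x y → R y x) (u v : V)
    (huv : R u v) (d d' : V) (l₁ l₂ : List V)
    (hch : List.IsChain R (d :: ((l₁ ++ d' :: l₂) ++ [d])))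
    (hlen : 4 ≤ (l₁ ++ d' :: l₂).length)
    (hcol : ∀ z ∈ l₁ ++ l₂, R u z ∨ R v z)
    (hU : ∃ x y, x ≠ y ∧ x ∈ l₁ ++ l₂ ∧ y ∈ l₁ ++ l₂ ∧ R u x ∧ R u y)
    (hV : ∃ x y, x ≠ y ∧ x ∈ l₁ ++ l₂ ∧ y ∈ l₁ ++ l₂ ∧ R v x ∧ R v y) :
    ∃ l', l'.Perm (u :: v :: (l₁ ++ d' :: l₂)) ∧ List.IsChain R (d :: (l' ++ [d])) := by
  rcases bi_insert R hR u v huv d _ hch with h | h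
  swap
  · exact h
  have c1 : List.IsChain (NoBi (R u) (R v)) l₁ := by
    have := (List.isChain_cons.1 h).2
    exact this.left_of_append.left_of_append
  have c2 : List.IsChain (NoBi (R u) (R v)) l₂ := by
    have := (List.isChain_cons.1 h).2
    exact (List.isChain_cons.1 this.left_of_append.right_of_append).2
  have col1 : ∀ z ∈ l₁, R u z ∨ R v z := fun z hz => hcol z (List.mem_append_left _ hz)
  have col2 : ∀ z ∈ l₂, R u z ∨ R v z := fun z hz => hcol z (List.mem_append_right _ hz)
  have small : ∀ l : List V, ¬ 2 ≤ l.length → ∀ x ∈ l, ∀ y ∈ l, x = y := by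
    intro l hl x hx y hy
    match l, hl with
    | [], _ => simp at hx
    | [a], _ => simp at hx hy; rw [hx, hy]
    | a :: b :: l, hl => simp at hl
  obtain ⟨x, y, hxy, hx, hy, hUx, hUy⟩ := hU
  obtain ⟨z, t, hzt, hz, ht, hVz, hVt⟩ := hV
  rw [List.mem_append] at hx hy hz ht
  by_cases g1 : 2 ≤ l₁.length
  · by_cases g2 : 2 ≤ l₂.length
    · rcases pure_chain' _ _ _ g1 c1 col1 with p1 | p1 <;>
      rcases pure_chain' _ _ _ g2 c2 col2 with p2 | p2
      · exfalso
        rcases hz with hz | hz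
        · exact (p1 z hz).2 hVz
        · exact (p2 z hz).2 hVz
      · exact extend2_aux R hR u v d d' l₁ l₂ hch g1 g2 (fun x hx => (p1 x hx).1)
          (fun x hx => (p2 x hx).1)
      · obtain ⟨l', hp, hc⟩ := extend2_aux R hR v u d d' l₁ l₂ hch g1 g2 (fun x hx => (p1 x hx).1)
          (fun x hx => (p2 x hx).1)
        exact ⟨l', hp.trans (List.Perm.swap _ _ _), hc⟩
      · exfalso
        rcases hx with hx | hx
        · exact (p1 x hx).2 hUx
        · exact (p2 x hx).2 hUx
    · exfalso
      have s := small l₂ g2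
      rcases pure_chain' _ _ _ g1 c1 col1 with p1 | p1
      · have hz' : z ∉ l₁ := fun h => (p1 z h).2 hVz
        have ht' : t ∉ l₁ := fun h => (p1 t h).2 hVt
        exact hzt (s z (hz.resolve_left hz') t (ht.resolve_left ht'))
      · have hz' : x ∉ l₁ := fun h => (p1 x h).2 hUx
        have ht' : y ∉ l₁ := fun h => (p1 y h).2 hUy
        exact hxy (s x (hx.resolve_left hz') y (hy.resolve_left ht'))
  · exfalso
    have s := small l₁ g1
    have g2 : 2 ≤ l₂.length := by
      simp only [List.length_append, List.length_cons] at hlen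
      omega
    rcases pure_chain' _ _ _ g2 c2 col2 with p1 | p1
    · have hz' : z ∉ l₂ := fun h => (p1 z h).2 hVz
      have ht' : t ∉ l₂ := fun h => (p1 t h).2 hVt
      exact hzt (s z (hz.resolve_right hz') t (ht.resolve_right ht'))
    · have hz' : x ∉ l₂ := fun h => (p1 x h).2 hUx
      have ht' : y ∉ l₂ := fun h => (p1 y h).2 hUy
      exact hxy (s x (hx.resolve_right hz') y (hy.resolve_right ht'))

theorem walk_chain {V : Type} {G : SimpleGraph V} {a b : V} (p : G.Walk a b) :
    List.IsChain (fun x y => s(x, y) ∈ p.edges) p.support := by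
  induction p with
  | nil => simp
  | @cons a b c h p ih =>
    rw [SimpleGraph.Walk.support_cons, SimpleGraph.Walk.edges_cons]
    have h1 := ih.imp (S := fun x y => s(x, y) ∈ s(a, b) :: p.edges)
      (fun x y hxy => List.mem_cons_of_mem _ hxy)
    cases p with
    | nil => simp
    | cons h' p =>
      rw [SimpleGraph.Walk.support_cons, List.isChain_cons]
      refine ⟨?_, h1⟩
      simp

theorem ham_to_list {n : ℕ} {H : Finset (Sym2 (Fin n))} (hH : H ∈ HamCycles n) (d : Fin n) :
    ∃ l, (d :: l).Nodup ∧ (∀ v, v ∈ d :: l) ∧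
      List.IsChain (fun x y => s(x, y) ∈ H) (d :: (l ++ [d])) := by
  obtain ⟨a, p, hp, rfl⟩ := hH
  have hd := hp.mem_support d
  set q := p.rotate d hd with hq
  have hqc : q.IsHamiltonianCycle := by
    rw [hq, SimpleGraph.Walk.isHamiltonianCycle_rotate]
    exact hp
  have hqe : ∀ e, e ∈ q.edges → e ∈ p.edges := fun e he =>
    (p.rotate_edges d hd).perm.subset he
  have hch := walk_chain q
  obtain ⟨-, hcount⟩ :=
    SimpleGraph.Walk.isHamiltonianCycle_iff_isCycle_and_support_count_tail_eq_one.1 hqc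
  have hs : q.support = d :: q.support.tail := (q.cons_tail_support).symm
  have hne : q.support.tail ≠ [] := by
    intro h0
    have := hcount d
    simp [h0] at this
  have hlast : q.support.tail.getLast hne = d := by
    rw [List.getLast_tail]
    simp
  have ht : q.support.tail = q.support.tail.dropLast ++ [d] := by
    conv_lhs => rw [← List.dropLast_append_getLast hne, hlast]
  set l := q.support.tail.dropLast with hl
  have hperm : (l ++ [d]).Perm (d :: l) := List.perm_append_singleton d l
  have hnd : (l ++ [d]).Nodup := by
    rw [← ht, List.nodup_iff_count_le_one]
    intro v
    exact (hcount v).le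
  refine ⟨l, hperm.nodup_iff.1 hnd, fun v => hperm.subset ?_, ?_⟩
  · rw [← ht, ← List.count_pos_iff, hcount v]
    norm_num
  · rw [← ht, ← hs]
    exact hch.imp fun x y hxy => List.mem_toFinset.2 (hqe _ hxy)

theorem chain_walk {m : ℕ} (E : Finset (Sym2 (Fin m))) (l : List (Fin m)) : ∀ a,
    List.IsChain (fun x y => x ≠ y ∧ s(x, y) ∈ E) (a :: l) →
    ∃ (b : Fin m) (p : (⊤ : SimpleGraph (Fin m)).Walk a b), p.support = a :: l ∧
      ∀ e ∈ p.edges, e ∈ E := by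
  induction l with
  | nil =>
    intro a _
    exact ⟨a, .nil, by simp, by simp⟩
  | cons c l ih =>
    intro a h
    rw [List.isChain_cons_cons] at h
    obtain ⟨b, p, hs, he⟩ := ih c h.2
    refine ⟨b, .cons (by simpa using h.1.1) p, by simp [hs], ?_⟩
    intro e hh
    rw [SimpleGraph.Walk.edges_cons, List.mem_cons] at hh
    rcases hh with rfl | hh
    · exact h.1.2
    · exact he e hh

theorem list_to_ham {m : ℕ} (hm : 3 ≤ m) (E : Finset (Sym2 (Fin m))) (a : Fin m)
    (l : List (Fin m)) (hnd : (a :: l).Nodup) (hmem : ∀ v, v ∈ a :: l)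
    (hch : List.IsChain (fun x y => x ≠ y ∧ s(x, y) ∈ E) (a :: (l ++ [a]))) :
    ∃ H ∈ HamCycles m, H ⊆ E := by
  obtain ⟨b, p, hs, he⟩ := chain_walk E _ a hch
  have hb : b = a := by
    have h1 := p.getLast_support
    simp only [hs] at h1
    rw [← h1]
    simp
  subst hb
  have hlen : p.length = m := by
    have h1 := p.length_support
    have h2 : (b :: l).length = m := by
      have h3 := List.toFinset_card_of_nodup hnd
      have h4 : (b :: l).toFinset = Finset.univ := by
        ext v; simpa using hmem v
      rw [h4] at h3
      simpa using h3.symm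
    simp [hs] at h1 h2
    omega
  have hnn : ¬ p.Nil := by
    rw [SimpleGraph.Walk.nil_iff_length_eq]
    omega
  have hperm : (l ++ [b]).Perm (b :: l) := List.perm_append_singleton b l
  have hcyc : p.IsCycle := by
    rw [SimpleGraph.Walk.isCycle_iff_isPath_tail_and_le_length]
    refine ⟨?_, by omega⟩
    rw [SimpleGraph.Walk.isPath_def, SimpleGraph.Walk.support_tail_of_not_nil _ hnn, hs]
    exact hperm.nodup_iff.2 hnd
  refine ⟨p.edges.toFinset, ⟨b, p, ?_, rfl⟩, fun e hh => he e (List.mem_toFinset.1 hh)⟩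
  rw [SimpleGraph.Walk.isHamiltonianCycle_iff_isCycle_and_support_count_tail_eq_one]
  refine ⟨hcyc, fun v => ?_⟩
  rw [hs, List.tail_cons]
  exact List.count_eq_one_of_mem (hperm.nodup_iff.2 hnd) (hperm.symm.subset (hmem v))

theorem five_le {n : ℕ} (h : MakerWinsSecond (Board n) (HamCycles n)) : 5 ≤ n := by
  obtain ⟨A, ⟨a, p, hp, rfl⟩, hc⟩ := mw_card h (by simp) (by simp) (by simp) (by simp)
  rw [List.toFinset_card_of_nodup hp.isCycle.isTrail.edges_nodup,
    SimpleGraph.Walk.length_edges, hp.length_eq, Board,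
    SimpleGraph.card_edgeFinset_top_eq_card_choose_two, Fintype.card_fin] at hc
  have h3 := hp.isCycle.three_le_length
  rw [hp.length_eq, Fintype.card_fin] at h3
  by_contra hn
  have : n = 3 ∨ n = 4 := by omega
  rcases this with rfl | rfl <;> simp [Nat.choose] at hc

theorem ham_edge_ne {n : ℕ} {H : Finset (Sym2 (Fin n))} (hH : H ∈ HamCycles n) {x y : Fin n}
    (h : s(x, y) ∈ H) : x ≠ y := by
  obtain ⟨a, p, -, rfl⟩ := hH
  have := p.edges_subset_edgeSet (List.mem_toFinset.1 h)
  simpa using this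

/-- The side map: edges from the two new vertices `u`, `v` to the old ones. -/
def sideMap {n m : ℕ} (ι : Fin n → Fin m) (u v : Fin m) (p : Fin n × Bool) : Sym2 (Fin m) :=
  if p.2 = true then s(u, ι p.1) else s(v, ι p.1)

theorem combine {n m : ℕ} (hn : 5 ≤ n) (hm : 3 ≤ m) (ι : Fin n → Fin m)
    (hι : Function.Injective ι) (u v : Fin m)
    (huv : u ≠ v) (hu : ∀ x, ι x ≠ u) (hv : ∀ x, ι x ≠ v) (hall : ∀ y, y = u ∨ y = v ∨ ∃ x, ι x = y)
    (A₁ : Finset (Sym2 (Fin n))) (hA₁ : A₁ ∈ HamCycles n)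
    (A₂ : Finset (Fin n × Bool)) (hA₂ : A₂ ∈ SideF n) :
    ∃ A ∈ HamCycles m,
      A ⊆ insert s(u, v) (A₁.image (Sym2.map ι) ∪ A₂.image (sideMap ι u v)) := by
  set E := insert s(u, v) (A₁.image (Sym2.map ι) ∪ A₂.image (sideMap ι u v)) with hE
  let R : Fin m → Fin m → Prop := fun x y => x ≠ y ∧ s(x, y) ∈ E
  have hR : ∀ x y, R x y → R y x := fun x y h => ⟨h.1.symm, by rw [Sym2.eq_swap]; exact h.2⟩
  have hRuv : R u v := ⟨huv, Finset.mem_insert_self _ _⟩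
  have hRu : ∀ x, (x, true) ∈ A₂ → R u (ι x) := fun x hx =>
    ⟨(hu x).symm, Finset.mem_insert_of_mem (Finset.mem_union_right _
      (Finset.mem_image.2 ⟨_, hx, by simp [sideMap]⟩))⟩
  have hRv : ∀ x, (x, false) ∈ A₂ → R v (ι x) := fun x hx =>
    ⟨(hv x).symm, Finset.mem_insert_of_mem (Finset.mem_union_right _
      (Finset.mem_image.2 ⟨_, hx, by simp [sideMap]⟩))⟩
  have hR1 : ∀ x y, s(x, y) ∈ A₁ → R (ι x) (ι y) := fun x y h =>
    ⟨fun h' => ham_edge_ne hA₁ h (hι h'), Finset.mem_insert_of_mem (Finset.mem_union_left _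
      (Finset.mem_image.2 ⟨_, h, by simp⟩))⟩
  -- it suffices to find a suitable list
  have key : ∀ (d : Fin n) (l : List (Fin n)), (d :: l).Nodup → (∀ v, v ∈ d :: l) →
      (∃ l', l'.Perm (u :: v :: l.map ι) ∧ List.IsChain R (ι d :: (l' ++ [ι d]))) →
      ∃ A ∈ HamCycles m, A ⊆ E := by
    rintro d l hnd hmem ⟨l', hp, hc⟩
    have hperm : (ι d :: l').Perm (u :: v :: (d :: l).map ι) := by
      refine (hp.cons _).trans ?_
      refine (List.Perm.swap _ _ _).trans ?_
      rw [List.map_cons]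
      exact (List.Perm.swap _ _ _).cons _
    refine list_to_ham hm E (ι d) l' (hperm.nodup_iff.2 ?_) (fun y => hperm.mem_iff.2 ?_) hc
    · rw [List.nodup_cons, List.nodup_cons]
      refine ⟨?_, ?_, hnd.map hι⟩
      · rw [List.mem_cons, List.mem_map]
        rintro (h | ⟨x, -, h⟩)
        · exact huv h
        · exact hu x h
      · rw [List.mem_map]
        rintro ⟨x, -, h⟩
        exact hv x h
    · rcases hall y with rfl | rfl | ⟨x, rfl⟩
      · simp
      · simp
      · exact List.mem_cons_of_mem _ (List.mem_cons_of_mem _ (List.mem_map_of_mem (hmem x)))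
  have hlist : ∀ d : Fin n, ∃ l, (d :: l).Nodup ∧ (∀ v, v ∈ d :: l) ∧ 4 ≤ (l.map ι).length ∧
      List.IsChain R (ι d :: (l.map ι ++ [ι d])) := by
    intro d
    obtain ⟨l, hnd, hmem, hch⟩ := ham_to_list hA₁ d
    refine ⟨l, hnd, hmem, ?_, ?_⟩
    · have h1 := List.toFinset_card_of_nodup hnd
      have h2 : (d :: l).toFinset = Finset.univ := by
        ext x
        simpa only [List.mem_toFinset, Finset.mem_univ, iff_true] using hmem x
      rw [h2, Finset.card_univ, Fintype.card_fin, List.length_cons] at h1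
      rw [List.length_map]
      omega
    · have h1 : List.IsChain R ((d :: (l ++ [d])).map ι) := by
        rw [List.isChain_map]
        exact hch.imp fun x y h => hR1 x y h
      simpa using h1
  rcases hA₂ with ⟨d, hcol, ⟨x, hx⟩, ⟨y, hy⟩⟩ | ⟨d, d', hdd, hcol,
    ⟨x, y, hxy, hxd, hxd', hyd, hyd', hx, hy⟩, ⟨z, w, hzw, hzd, hzd', hwd, hwd', hz, hw⟩⟩
  · obtain ⟨l, hnd, hmem, hlen, hch⟩ := hlist d
    refine key d l hnd hmem (extend1 R hR u v hRuv (ι d) (l.map ι) hch hlen ?_ ?_ ?_)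
    · intro q hq
      obtain ⟨p, hp, rfl⟩ := List.mem_map.1 hq
      have hpd : p ≠ d := by
        rintro rfl
        exact (List.nodup_cons.1 hnd).1 hp
      exact (hcol p hpd).imp (hRu p) (hRv p)
    · exact ⟨ι x, by rw [← List.map_cons]; exact List.mem_map_of_mem (hmem x), hRu x hx⟩
    · exact ⟨ι y, by rw [← List.map_cons]; exact List.mem_map_of_mem (hmem y), hRv y hy⟩
  · obtain ⟨l, hnd, hmem, hlen, hch⟩ := hlist d
    have hd'l : d' ∈ l := (List.mem_cons.1 (hmem d')).resolve_left hdd.symm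
    obtain ⟨l₁, l₂, rfl⟩ := List.append_of_mem hd'l
    have hin : ∀ p, p ≠ d → p ≠ d' → ι p ∈ l₁.map ι ++ l₂.map ι := by
      intro p h1 h2
      have := hmem p
      rw [← List.map_append]
      refine List.mem_map_of_mem ?_
      simp only [List.mem_cons, List.mem_append] at this ⊢
      tauto
    have hout : ∀ p, p ∈ l₁ ++ l₂ → p ≠ d ∧ p ≠ d' := by
      intro p hp
      rw [List.nodup_cons, List.nodup_middle, List.nodup_cons] at hnd
      constructor
      · rintro rfl
        apply hnd.1
        simp only [List.mem_cons, List.mem_append] at hp ⊢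
        tauto
      · rintro rfl
        exact hnd.2.1 hp
    rw [List.map_append, List.map_cons] at hch hlen
    refine key d _ hnd hmem ?_
    rw [List.map_append, List.map_cons]
    refine extend2 R hR u v hRuv (ι d) (ι d') (l₁.map ι) (l₂.map ι) hch hlen ?_ ?_ ?_
    · intro q hq
      rw [← List.map_append] at hq
      obtain ⟨p, hp, rfl⟩ := List.mem_map.1 hq
      obtain ⟨h1, h2⟩ := hout p hp
      exact (hcol p h1 h2).imp (hRu p) (hRv p)
    · exact ⟨ι x, ι y, fun h => hxy (hι h), hin x hxd hxd', hin y hyd hyd', hRu x hx, hRu y hy⟩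
    · exact ⟨ι z, ι w, fun h => hzw (hι h), hin z hzd hzd', hin w hwd hwd', hRv z hz, hRv w hw⟩

theorem exists_embed {n : ℕ} (u v : Fin (n + 2)) (huv : u ≠ v) :
    ∃ ι : Fin n → Fin (n + 2), Function.Injective ι ∧ (∀ x, ι x ≠ u) ∧ (∀ x, ι x ≠ v) ∧
      ∀ y, y = u ∨ y = v ∨ ∃ x, ι x = y := by
  have hc : (({u, v} : Finset (Fin (n + 2)))ᶜ).card = n := by
    rw [Finset.card_compl, Finset.card_pair huv, Fintype.card_fin]
    omega
  let f := (({u, v} : Finset (Fin (n + 2)))ᶜ).orderEmbOfFin hc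
  have hf : ∀ x, f x ∈ (({u, v} : Finset (Fin (n + 2)))ᶜ) := Finset.orderEmbOfFin_mem _ hc
  have hr : Set.range f = ((({u, v} : Finset (Fin (n + 2)))ᶜ : Finset _) : Set _) :=
    Finset.range_orderEmbOfFin _ hc
  refine ⟨f, f.injective, fun x h => ?_, fun x h => ?_, fun y => ?_⟩
  · have := hf x
    simp [h] at this
  · have := hf x
    simp [h] at this
  · by_cases h1 : y = u
    · exact Or.inl h1
    by_cases h2 : y = v
    · exact Or.inr (Or.inl h2)
    refine Or.inr (Or.inr ?_)
    have : y ∈ Set.range f := by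
      rw [hr]
      simp [h1, h2]
    exact this

theorem mem_board {m : ℕ} {a b : Fin m} : s(a, b) ∈ Board m ↔ a ≠ b := by
  simp [Board]

theorem after_first {n : ℕ} (h : MakerWinsSecond (Board n) (HamCycles n))
    (a b : Fin (n + 2)) (hab : a ≠ b) :
    MakerWins (Board (n + 2)) (HamCycles (n + 2)) true ∅ (insert s(a, b) ∅) := by
  have hn := five_le h
  obtain ⟨v, hv⟩ : ∃ v, v ∉ ({a, b} : Finset (Fin (n + 2))) := by
    by_contra! hcon
    have h1 : (Finset.univ : Finset (Fin (n + 2))) ⊆ {a, b} := fun x _ => hcon x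
    have h2 := Finset.card_le_card h1
    rw [Finset.card_univ, Fintype.card_fin, Finset.card_pair hab] at h2
    omega
  simp only [Finset.mem_insert, Finset.mem_singleton, not_or] at hv
  obtain ⟨hva, hvb⟩ := hv
  obtain ⟨ι, hι, hu, hv, hall⟩ := exists_embed a v (Ne.symm hva)
  obtain ⟨w, hw⟩ : ∃ w, ι w = b := by
    rcases hall b with h1 | h1 | h1
    · exact absurd h1.symm hab
    · exact absurd h1.symm hvb
    · exact h1
  have hmain := mw_comp (X := Board (n + 2)) (X₁ := Board n) (X₂ := Finset.univ)
    (F := HamCycles (n + 2)) (F₁ := HamCycles n) (F₂ := SideF n)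
    s(a, v) (Sym2.map ι) (sideMap ι a v) (Sym2.map.injective hι) ?_ ?_ ?_ ?_ ?_
    (combine hn (by omega) ι hι a v (Ne.symm hva) hu hv hall) _ le_rfl h (side_A hn w)
  · refine MakerWins.makerMove s(a, v) (mem_board.2 (Ne.symm hva)) (by simp) ?_ ?_
    · rw [Finset.mem_insert, Sym2.eq_iff]
      grind
    · have e : sideMap ι a v (w, true) = s(a, b) := by simp [sideMap, hw]
      simpa [e] using hmain
  · rintro ⟨x, s⟩ ⟨y, t⟩ hxy
    have := hu x
    have := hu y
    have := hv x
    have := hv y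
    have := @hι x y
    cases s <;> cases t <;> simp only [sideMap, Sym2.eq_iff, Bool.false_eq_true, if_true, if_false] at hxy <;> grind
  · intro p
    induction p with | _ x y
    rintro ⟨z, t⟩ hxy
    have := hu x
    have := hu y
    have := hv x
    have := hv y
    cases t <;> simp only [sideMap, Sym2.map_mk, Sym2.eq_iff, Bool.false_eq_true, if_true, if_false] at hxy <;> grind
  · intro p
    induction p with | _ x y
    intro hxy
    have := hu x
    have := hu y
    simp only [Sym2.map_mk, Sym2.eq_iff] at hxy
    grind
  · rintro ⟨z, t⟩ hxy
    have := hu z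
    have := hv z
    cases t <;> simp only [sideMap, Sym2.eq_iff, Bool.false_eq_true, if_true, if_false] at hxy <;> grind
  · intro f
    induction f with | _ x y
    rw [mem_board]
    constructor
    · intro hxy
      rcases hall x with rfl | rfl | ⟨x, rfl⟩ <;> rcases hall y with rfl | rfl | ⟨y, rfl⟩
      · exact absurd rfl hxy
      · exact Or.inl rfl
      · exact Or.inr (Or.inr ⟨(y, true), by simp, by simp [sideMap]⟩)
      · exact Or.inl Sym2.eq_swap
      · exact absurd rfl hxy
      · exact Or.inr (Or.inr ⟨(y, false), by simp, by simp [sideMap]⟩)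
      · exact Or.inr (Or.inr ⟨(x, true), by simp, by simp [sideMap]⟩)
      · exact Or.inr (Or.inr ⟨(x, false), by simp, by simp [sideMap]⟩)
      · exact Or.inr (Or.inl ⟨s(x, y), mem_board.2 fun h => hxy (congrArg ι h), by simp⟩)
    · rintro (h1 | ⟨p, hp, h1⟩ | ⟨⟨z, t⟩, -, h1⟩)
      · rw [Sym2.eq_iff] at h1
        grind
      · induction p with | _ p q
        rw [mem_board] at hp
        simp only [Sym2.map_mk, Sym2.eq_iff] at h1
        have := @hι p q
        grind
      · have := hu z
        have := hv z
        cases t <;> simp only [sideMap, Sym2.eq_iff, Bool.false_eq_true, if_true, if_false] at h1 <;> grind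

/-- If Maker, as second player, wins the Hamiltonicity game on `K_n`,
then he also wins it, as second player, on `K_{n+2}`. -/
theorem hamiltonicity_induction_step (n : ℕ)
    (h : MakerWinsSecond (Board n) (HamCycles n)) :
    MakerWinsSecond (Board (n + 2)) (HamCycles (n + 2)) := by
  refine MakerWins.breakerMove s(0, 1) (mem_board.2 ?_) (by simp) (by simp) ?_
  · simp
  · intro f hf _ _
    induction f with | _ a b
    exact after_first h a b (mem_board.1 hf)
end

section
/- In the Maker-Breaker Hamiltonian Path game on E(K_n), Maker has a winning strategy (regardless of which player moves first) if and only if n ≥ 5, for all n ≥ 4. -/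
section HPG

/-- Monotonicity: extra Maker elements, fewer Breaker elements (on the board), and the turn
can only help Maker. -/
theorem mw_mono_s3 {α : Type} [DecidableEq α] {X : Finset α} {F : Set (Finset α)}
    {t : Bool} {M B : Finset α} (h : MakerWins X F t M B) :
    ∀ (t2 : Bool) (M2 B2 : Finset α), (t = true → t2 = true) → M ⊆ M2 →
      (∀ e ∈ X, e ∈ B2 → e ∈ B) → MakerWins X F t2 M2 B2 := by
  induction h with
  | claim A hA hAM =>
    intro t2 M2 B2 _ hM _
    exact .claim A hA (hAM.trans hM)
  | @makerMove M B e he heM heB h ih =>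
    intro t2 M2 B2 ht hM hB
    obtain rfl := ht rfl
    by_cases h2 : e ∈ M2
    · exact ih true M2 B2 (by simp) (Finset.insert_subset h2 hM) hB
    · exact .makerMove e he h2 (fun hh => heB (hB e he hh))
        (ih false _ B2 (by simp) (Finset.insert_subset_insert _ hM) hB)
  | @breakerMove M B e he heM heB h ih =>
    intro t2 M2 B2 _ hM hB
    have key : MakerWins X F true M2 B2 :=
      ih e he heM heB true M2 B2 (by simp) hM
        (fun x hx hxB => Finset.mem_insert_of_mem (hB x hx hxB))
    cases t2 with
    | true => exact key
    | false =>
      by_cases hf : ∃ g ∈ X, g ∉ M2 ∧ g ∉ B2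
      · obtain ⟨g, hg, hgM, hgB⟩ := hf
        refine .breakerMove g hg hgM hgB ?_
        intro f hf hfM hfB
        have hfM' : f ∉ M := fun hh => hfM (hM hh)
        by_cases hfB' : f ∈ B
        · refine ih e he heM heB true M2 _ (by simp) hM ?_
          intro x hx hxB
          rcases Finset.mem_insert.1 hxB with rfl | hxB
          · exact Finset.mem_insert_of_mem hfB'
          · exact Finset.mem_insert_of_mem (hB x hx hxB)
        · refine ih f hf hfM' hfB' true M2 _ (by simp) hM ?_
          intro x hx hxB
          rcases Finset.mem_insert.1 hxB with rfl | hxB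
          · exact Finset.mem_insert_self _ _
          · exact Finset.mem_insert_of_mem (hB x hx hxB)
      · cases key with
        | claim A hA hAM => exact .claim A hA hAM
        | makerMove e he heM heB h => exact absurd ⟨e, he, heM, heB⟩ hf

/-- Changing the winning sets. -/
theorem mw_family {α : Type} [DecidableEq α] {X : Finset α} {F F' : Set (Finset α)}
    (hF : ∀ A ∈ F, ∃ A' ∈ F', A' ⊆ A)
    {t : Bool} {M B : Finset α} (h : MakerWins X F t M B) : MakerWins X F' t M B := by
  induction h with
  | claim A hA hAM =>
    obtain ⟨A', h1, h2⟩ := hF A hA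
    exact .claim A' h1 (h2.trans hAM)
  | makerMove e he heM heB h ih => exact .makerMove e he heM heB ih
  | breakerMove e he heM heB h ih => exact .breakerMove e he heM heB ih

/-- Transport along an injective map. -/
theorem mw_map {α β : Type} [DecidableEq α] [DecidableEq β] {X : Finset α} {F : Set (Finset α)}
    {F' : Set (Finset β)} (φ : α → β) (hφ : Function.Injective φ)
    (hF : ∀ A ∈ F, A.image φ ∈ F')
    {t : Bool} {M B : Finset α} (h : MakerWins X F t M B) :
    MakerWins (X.image φ) F' t (M.image φ) (B.image φ) := by
  have mem : ∀ (s : Finset α) (e : α), φ e ∈ s.image φ ↔ e ∈ s := by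
    intro s e
    simp [hφ.eq_iff]
  induction h with
  | claim A hA hAM => exact .claim _ (hF A hA) (Finset.image_subset_image hAM)
  | makerMove e he heM heB h ih =>
    refine .makerMove (φ e) ((mem _ _).2 he) (by rwa [mem]) (by rwa [mem]) ?_
    rw [← Finset.image_insert]
    exact ih
  | breakerMove e he heM heB h ih =>
    refine .breakerMove (φ e) ((mem _ _).2 he) (by rwa [mem]) (by rwa [mem]) ?_
    intro f hf hfM hfB
    obtain ⟨f, hf', rfl⟩ := Finset.mem_image.1 hf
    rw [mem] at hfM hfB
    rw [← Finset.image_insert]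
    exact ih f hf' hfM hfB

/-- Playing a game on a sub-board together with a pairing strategy outside of it. -/
theorem mw_comp_s3 {α : Type} [DecidableEq α] {X X1 : Finset α} {F F1 : Set (Finset α)}
    (hX : X1 ⊆ X) (pairs : Set (α × α))
    (hne : ∀ p ∈ pairs, p.1 ≠ p.2)
    (hdisj : ∀ p ∈ pairs, ∀ q ∈ pairs, p ≠ q →
      p.1 ≠ q.1 ∧ p.1 ≠ q.2 ∧ p.2 ≠ q.1 ∧ p.2 ≠ q.2)
    (hpX : ∀ p ∈ pairs, p.1 ∈ X ∧ p.2 ∈ X ∧ p.1 ∉ X1 ∧ p.2 ∉ X1)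
    (M0 : Finset α)
    (hwin : ∀ M, M0 ⊆ M → (∃ A ∈ F1, A ⊆ M) → (∀ p ∈ pairs, p.1 ∈ M ∨ p.2 ∈ M) →
      ∃ A ∈ F, A ⊆ M) :
    ∀ (N : ℕ) (t : Bool) (M B : Finset α), (X \ (M ∪ B)).card ≤ N →
      MakerWins X1 F1 t M B → M0 ⊆ M →
      (∀ p ∈ pairs, p.1 ∈ M ∨ p.2 ∈ M ∨ (p.1 ∉ B ∧ p.2 ∉ B)) →
      MakerWins X F t M B := by
  intro N
  induction N with
  | zero =>
    intro t M B hN hin hM hinv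
    have hfull : ∀ e ∈ X, e ∉ M → e ∉ B → False := by
      intro e he h1 h2
      have : e ∈ X \ (M ∪ B) := by simp [he, h1, h2]
      rw [Nat.le_zero, Finset.card_eq_zero] at hN
      simp [hN] at this
    have hA : ∃ A ∈ F1, A ⊆ M := by
      cases hin with
      | claim A hA hAM => exact ⟨A, hA, hAM⟩
      | makerMove e he heM heB h => exact (hfull e (hX he) heM heB).elim
      | breakerMove e he heM heB h => exact (hfull e (hX he) heM heB).elim
    obtain ⟨A, hA, hAM⟩ := hwin M hM hA (by
      intro p hp
      obtain ⟨h1, h2, -, -⟩ := hpX p hp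
      rcases hinv p hp with h | h | h
      · exact Or.inl h
      · exact Or.inr h
      · by_contra hcon
        rw [not_or] at hcon
        exact hfull _ h1 hcon.1 h.1)
    exact .claim A hA hAM
  | succ N ih =>
    intro t M B hN hin hM hinv
    have hdecM : ∀ e M' B', e ∈ X → e ∉ M → e ∉ B → M ⊆ M' → B ⊆ B' → (e ∈ M' ∨ e ∈ B') →
        (X \ (M' ∪ B')).card ≤ N := by
      intro e M' B' he h1 h2 h3 h4 h5
      have : (X \ (M' ∪ B')).card < (X \ (M ∪ B)).card := by
        apply Finset.card_lt_card
        rw [Finset.ssubset_iff_of_subset (Finset.sdiff_subset_sdiff le_rfl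
          (Finset.union_subset_union h3 h4))]
        refine ⟨e, by simp [he, h1, h2], ?_⟩
        simp only [Finset.mem_sdiff, Finset.mem_union]
        tauto
      omega
    by_cases hf : ∃ e ∈ X, e ∉ M ∧ e ∉ B
    swap
    · apply ih t M B _ hin hM hinv
      have : X \ (M ∪ B) = ∅ := by
        ext e
        simp only [Finset.mem_sdiff, Finset.mem_union, Finset.notMem_empty, iff_false]
        rintro ⟨h1, h2⟩
        exact hf ⟨e, h1, fun h => h2 (Or.inl h), fun h => h2 (Or.inr h)⟩
      simp [this]
    obtain ⟨e0, he0, he0M, he0B⟩ := hf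
    cases t with
    | true =>
      have : ∃ e ∈ X, e ∉ M ∧ e ∉ B ∧ MakerWins X1 F1 false (insert e M) B := by
        cases hin with
        | claim A hA hAM =>
          exact ⟨e0, he0, he0M, he0B, .claim A hA (hAM.trans (Finset.subset_insert _ _))⟩
        | makerMove e he heM heB h => exact ⟨e, hX he, heM, heB, h⟩
      obtain ⟨e, he, heM, heB, h⟩ := this
      refine .makerMove e he heM heB (ih _ _ _ ?_ h (hM.trans (Finset.subset_insert _ _)) ?_)
      · exact hdecM e _ _ he heM heB (Finset.subset_insert _ _) le_rfl (by simp)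
      · intro p hp
        rcases hinv p hp with h | h | h
        · exact Or.inl (Finset.mem_insert_of_mem h)
        · exact Or.inr (Or.inl (Finset.mem_insert_of_mem h))
        · exact Or.inr (Or.inr h)
    | false =>
      refine .breakerMove e0 he0 he0M he0B ?_
      intro g hg hgM hgB
      by_cases hI : ∀ p ∈ pairs, p.1 ∈ M ∨ p.2 ∈ M ∨ (p.1 ∉ insert g B ∧ p.2 ∉ insert g B)
      · refine ih _ _ _ ?_ ?_ hM hI
        · exact hdecM g _ _ hg hgM hgB le_rfl (Finset.subset_insert _ _) (by simp)
        · by_cases hg1 : g ∈ X1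
          · cases hin with
            | claim A hA hAM => exact .claim A hA hAM
            | breakerMove e he heM heB h => exact h g hg1 hgM hgB
          · refine mw_mono_s3 hin true M _ (by simp) le_rfl ?_
            intro e he heB
            rcases Finset.mem_insert.1 heB with rfl | h
            · exact absurd he hg1
            · exact h
      · push Not at hI
        obtain ⟨p, hp, hp1, hp2, hpB⟩ := hI
        have hpB0 : p.1 ∉ B ∧ p.2 ∉ B := by
          rcases hinv p hp with h | h | h
          · exact absurd h hp1
          · exact absurd h hp2
          · exact h
        obtain ⟨hx1, hx2, hy1, hy2⟩ := hpX p hp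
        have : ∃ h ∈ X, h ∉ M ∧ h ∉ insert g B ∧ (h = p.1 ∧ g = p.2 ∨ h = p.2 ∧ g = p.1) := by
          by_cases hg1 : p.1 = g
          · refine ⟨p.2, hx2, hp2, ?_, Or.inr ⟨rfl, hg1.symm⟩⟩
            rw [Finset.mem_insert, not_or]
            exact ⟨fun hh => hne p hp (hg1.trans hh.symm), hpB0.2⟩
          · have h1 : p.1 ∉ insert g B := by
              rw [Finset.mem_insert, not_or]
              exact ⟨hg1, hpB0.1⟩
            have h2 := hpB h1
            rcases Finset.mem_insert.1 h2 with h2 | h2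
            · exact ⟨p.1, hx1, hp1, h1, Or.inl ⟨rfl, h2.symm⟩⟩
            · exact absurd h2 hpB0.2
        obtain ⟨h, hhX, hhM, hhB, hor⟩ := this
        refine .makerMove h hhX hhM hhB
          (ih _ _ _ ?_ ?_ (hM.trans (Finset.subset_insert _ _)) ?_)
        · exact hdecM g _ _ hg hgM hgB (Finset.subset_insert _ _) (Finset.subset_insert _ _)
            (by simp)
        · refine mw_mono_s3 hin false _ _ (by simp) (Finset.subset_insert _ _) ?_
          intro e he heB
          rcases Finset.mem_insert.1 heB with rfl | h
          · rcases hor with ⟨-, rfl⟩ | ⟨-, rfl⟩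
            · exact absurd he hy2
            · exact absurd he hy1
          · exact h
        · intro q hq
          by_cases hqp : p = q
          · subst hqp
            rcases hor with ⟨rfl, -⟩ | ⟨rfl, -⟩ <;> simp
          · obtain ⟨d1, d2, d3, d4⟩ := hdisj p hp q hq hqp
            rcases hinv q hq with h | h | h
            · exact Or.inl (Finset.mem_insert_of_mem h)
            · exact Or.inr (Or.inl (Finset.mem_insert_of_mem h))
            · refine Or.inr (Or.inr ?_)
              simp only [Finset.mem_insert, not_or]
              rcases hor with ⟨-, rfl⟩ | ⟨-, rfl⟩
              · exact ⟨⟨d3.symm, h.1⟩, ⟨d4.symm, h.2⟩⟩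
              · exact ⟨⟨d1.symm, h.1⟩, ⟨d2.symm, h.2⟩⟩

/-- Edges inside a vertex set. -/
def edg {V : Type} [DecidableEq V] (S : Finset V) : Finset (Sym2 V) :=
  S.sym2.filter (fun e => ¬ e.IsDiag)

theorem mem_edg {V : Type} [DecidableEq V] {S : Finset V} {a b : V} :
    s(a, b) ∈ edg S ↔ a ∈ S ∧ b ∈ S ∧ a ≠ b := by
  simp [edg, and_assoc]

/-- Edge sets containing a path through all vertices of `S`. -/
def pth {V : Type} [DecidableEq V] (S : Finset V) : Set (Finset (Sym2 V)) :=
  {A | ∃ l : List V, l.Nodup ∧ (∀ x, x ∈ l ↔ x ∈ S) ∧ l.IsChain (fun a b => s(a, b) ∈ A)}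

theorem path_extend {V : Type} [DecidableEq V] {T S : Finset V} {u v x : V}
    (huv : u ≠ v) (hu : u ∉ T) (hv : v ∉ T) (hS : ∀ y, y ∈ S ↔ y = u ∨ y = v ∨ y ∈ T)
    (hT : 2 ≤ T.card) {M : Finset (Sym2 V)} (hM : s(u, v) ∈ M) (hP : ∃ A ∈ pth T, A ⊆ M)
    (hatt : ∀ y ∈ T, y ≠ x → s(y, u) ∈ M ∨ s(y, v) ∈ M) : M ∈ pth S := by
  have h1 : ∃ (a : V) (l : List V), a ≠ x ∧ (a :: l).Nodup ∧ (∀ y, y ∈ a :: l ↔ y ∈ T) ∧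
      (a :: l).IsChain (fun a b => s(a, b) ∈ M) := by
    obtain ⟨A, ⟨l, hl, hlT, hc⟩, hAM⟩ := hP
    have hc : l.IsChain (fun a b => s(a, b) ∈ M) := hc.imp (fun a b h => hAM h)
    have hlen : 2 ≤ l.length := by
      have : l.toFinset = T := by ext y; simp [hlT]
      rw [← this] at hT
      exact hT.trans (List.toFinset_card_le l)
    match l, hl, hlT, hc, hlen with
    | a :: l, hl, hlT, hc, hlen =>
      by_cases hax : a = x
      · have hr : ((a :: l).reverse).IsChain (fun a b => s(a, b) ∈ M) := by
          rw [List.isChain_reverse]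
          exact hc.imp (fun a b h => by rwa [Sym2.eq_swap])
        have hn : ((a :: l).reverse).Nodup := List.nodup_reverse.2 hl
        have hm : ∀ y, y ∈ (a :: l).reverse ↔ y ∈ T := by
          intro y
          rw [List.mem_reverse, hlT]
        have hlr : l.reverse ≠ [] := by
          intro h
          rw [List.reverse_eq_nil_iff] at h
          simp [h] at hlen
        rw [List.reverse_cons] at hr hn hm
        obtain ⟨b, l', hb⟩ := List.exists_cons_of_ne_nil hlr
        rw [hb] at hr hn hm
        refine ⟨b, l' ++ [a], ?_, hn, hm, hr⟩
        have : b ∈ l := by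
          rw [← List.mem_reverse, hb]
          simp
        rintro rfl
        subst hax
        exact (List.nodup_cons.1 hl).1 this
      · exact ⟨a, l, hax, hl, hlT, hc⟩
  obtain ⟨a, l, hax, hn, hm, hc⟩ := h1
  have haT : a ∈ T := (hm a).1 (by simp)
  have hul : u ∉ a :: l := fun h => hu ((hm u).1 h)
  have hvl : v ∉ a :: l := fun h => hv ((hm v).1 h)
  rcases hatt a haT hax with h | h
  · refine ⟨v :: u :: a :: l, ?_, ?_, ?_⟩
    · rw [List.nodup_cons, List.nodup_cons]
      refine ⟨?_, hul, hn⟩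
      rw [List.mem_cons, not_or]
      exact ⟨huv.symm, hvl⟩
    · intro y
      rw [List.mem_cons, List.mem_cons, hm, hS]
      tauto
    · rw [List.isChain_cons_cons, List.isChain_cons_cons]
      exact ⟨by rwa [Sym2.eq_swap], by rwa [Sym2.eq_swap], hc⟩
  · refine ⟨u :: v :: a :: l, ?_, ?_, ?_⟩
    · rw [List.nodup_cons, List.nodup_cons]
      refine ⟨?_, hvl, hn⟩
      rw [List.mem_cons, not_or]
      exact ⟨huv, hul⟩
    · intro y
      rw [List.mem_cons, List.mem_cons, hm, hS]
    · rw [List.isChain_cons_cons, List.isChain_cons_cons]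
      exact ⟨hM, by rwa [Sym2.eq_swap], hc⟩

/-- The induction step from `k` vertices to `k + 2` vertices. -/
theorem step {V : Type} [DecidableEq V] {S : Finset V} (hS : 4 ≤ S.card)
    (ih : ∀ T : Finset V, T.card + 2 = S.card → MakerWins (edg T) (pth T) false ∅ ∅) :
    MakerWins (edg S) (pth S) false ∅ ∅ := by
  obtain ⟨a, ha, b, hb, hab⟩ := Finset.one_lt_card.1 (by omega : 1 < S.card)
  refine .breakerMove s(a, b) (mem_edg.2 ⟨ha, hb, hab⟩) (by simp) (by simp) ?_
  intro e he _ _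
  induction e with | _ x u
  obtain ⟨hx, hu, hxu⟩ := mem_edg.1 he
  obtain ⟨v, hv⟩ : ((S.erase x).erase u).Nonempty := by
    rw [← Finset.card_pos, Finset.card_erase_of_mem (by simp [hu, hxu.symm]),
      Finset.card_erase_of_mem hx]
    omega
  simp only [Finset.mem_erase] at hv
  obtain ⟨hvu, hvx, hvS⟩ := hv
  have hc : ((S.erase u).erase v).card + 2 = S.card := by
    rw [Finset.card_erase_of_mem (by simp [hvu, hvS]), Finset.card_erase_of_mem hu]
    omega
  have hT := ih _ hc
  generalize hTd : (S.erase u).erase v = T at hc hT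
  have hmT : ∀ y, y ∈ T ↔ y ≠ v ∧ y ≠ u ∧ y ∈ S := by
    intro y
    simp [← hTd]
  have hxT : x ∈ T := by simp [hmT, hx, hxu, hvx.symm]
  refine .makerMove s(u, v) (mem_edg.2 ⟨hu, hvS, hvu.symm⟩) (by simp) ?_ ?_
  · simp only [insert_empty_eq, Finset.mem_singleton, Sym2.eq_iff]
    rintro (⟨h1, h2⟩ | ⟨h1, h2⟩)
    · exact hvu h2
    · exact hvx h2
  refine mw_comp_s3 (X1 := edg T) (F1 := pth T) ?_
    {p | ∃ y ∈ T, y ≠ x ∧ p = (s(y, u), s(y, v))} ?_ ?_ ?_ {s(u, v)} ?_ _ _ _ _ le_rfl ?_ ?_ ?_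
  · intro e
    induction e with | _ c d
    simp only [mem_edg, hmT]
    tauto
  · rintro _ ⟨y, hy, hyx, rfl⟩
    have := hmT y
    simp only [ne_eq, Sym2.eq_iff]
    grind
  · rintro _ ⟨y, hy, hyx, rfl⟩ _ ⟨z, hz, hzx, rfl⟩ hne
    have hyz : y ≠ z := by
      rintro rfl
      exact hne rfl
    have := hmT y
    have := hmT z
    simp only [ne_eq, Sym2.eq_iff]
    grind
  · rintro _ ⟨y, hy, hyx, rfl⟩
    have := hmT y
    have := hmT u
    have := hmT v
    simp only [mem_edg]
    grind
  · intro M hM hP hatt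
    refine ⟨M, path_extend (T := T) (u := u) (v := v) (x := x) hvu.symm ?_ ?_ ?_ ?_ ?_ hP ?_,
      le_rfl⟩
    · simp [hmT]
    · simp [hmT]
    · intro y
      have := hmT y
      grind
    · omega
    · exact hM (by simp)
    · intro y hy hyx
      exact hatt (s(y, u), s(y, v)) ⟨y, hy, hyx, rfl⟩
  · refine mw_mono_s3 hT _ _ _ (by simp) (by simp) ?_
    intro e he heB
    simp only [insert_empty_eq, Finset.mem_singleton] at heB
    subst heB
    have := (mem_edg.1 he).2.1
    rw [hmT] at this
    exact absurd rfl this.2.1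
  · simp
  · rintro _ ⟨y, hy, hyx, rfl⟩
    have := hmT y
    refine Or.inr (Or.inr ?_)
    simp only [insert_empty_eq, Finset.mem_singleton, Sym2.eq_iff]
    grind

/-- All transversals of a list of pairs. -/
def tv {α : Type} : List (α × α) → List (List α)
  | [] => [[]]
  | p :: ps => (tv ps).flatMap (fun t => [p.1 :: t, p.2 :: t])

theorem tv_spec {α : Type} (Q : α → Prop) (ps : List (α × α)) (h : ∀ p ∈ ps, Q p.1 ∨ Q p.2) :
    ∃ t ∈ tv ps, ∀ e ∈ t, Q e := by
  induction ps with
  | nil => exact ⟨[], by simp [tv], by simp⟩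
  | cons p ps ih =>
    obtain ⟨t, ht, hQ⟩ := ih (fun q hq => h q (List.mem_cons_of_mem _ hq))
    rcases h p (by simp) with h | h
    · exact ⟨p.1 :: t, by simp only [tv, List.mem_flatMap]; exact ⟨t, ht, by simp⟩, by
        simpa [h] using hQ⟩
    · exact ⟨p.2 :: t, by simp only [tv, List.mem_flatMap]; exact ⟨t, ht, by simp⟩, by
        simpa [h] using hQ⟩

theorem base_fin {k : ℕ} (ps : List (Sym2 (Fin k) × Sym2 (Fin k))) (L : List (List (Fin k)))
    (hne : ∀ p ∈ ps, p.1 ≠ p.2)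
    (hdisj : ∀ p ∈ ps, ∀ q ∈ ps, p ≠ q → p.1 ≠ q.1 ∧ p.1 ≠ q.2 ∧ p.2 ≠ q.1 ∧ p.2 ≠ q.2)
    (hpX : ∀ p ∈ ps, ¬ p.1.IsDiag ∧ ¬ p.2.IsDiag)
    (hL : ∀ l ∈ L, l.Nodup ∧ ∀ x, x ∈ l)
    (hcov : ∀ t ∈ tv ps, ∃ l ∈ L, l.IsChain (fun a b => s(a, b) ∈ t)) :
    MakerWins (edg (Finset.univ : Finset (Fin k))) (pth Finset.univ) false ∅ ∅ := by
  refine mw_comp_s3 (X1 := ∅) (F1 := {∅}) (by simp) {p | p ∈ ps} hne hdisj ?_ ∅ ?_ _ _ _ _ le_rfl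
    (.claim ∅ rfl le_rfl) le_rfl (by simp)
  · intro p hp
    obtain ⟨h1, h2⟩ := hpX p hp
    simp [edg, h1, h2]
  · intro M _ _ h
    obtain ⟨t, ht, hQ⟩ := tv_spec (· ∈ M) ps h
    obtain ⟨l, hl, hc⟩ := hcov t ht
    obtain ⟨h1, h2⟩ := hL l hl
    exact ⟨M, ⟨l, h1, by simp [h2], hc.imp (fun a b hab => hQ _ hab)⟩, le_rfl⟩

theorem base5 : MakerWins (edg (Finset.univ : Finset (Fin 5))) (pth Finset.univ) false ∅ ∅ :=
  base_fin [(s(0, 1), s(0, 2)), (s(0, 3), s(1, 3)), (s(0, 4), s(3, 4)), (s(1, 2), s(1, 4)),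
    (s(2, 3), s(2, 4))]
    [[0, 1, 2, 3, 4],
      [0, 1, 2, 4, 3],
      [0, 1, 4, 3, 2],
      [0, 2, 1, 3, 4],
      [0, 2, 3, 1, 4],
      [0, 2, 4, 1, 3],
      [0, 4, 2, 1, 3],
      [1, 2, 0, 3, 4],
      [1, 2, 3, 0, 4],
      [1, 2, 4, 0, 3],
      [1, 4, 0, 3, 2],
      [1, 4, 2, 0, 3],
      [2, 3, 1, 0, 4],
      [2, 4, 1, 0, 3],
      [0, 1, 3, 4, 2],
      [0, 2, 3, 4, 1],
      [1, 3, 2, 0, 4],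
      [2, 4, 0, 1, 3]]
    (by decide +kernel) (by decide +kernel) (by decide +kernel) (by decide +kernel)
    (by decide +kernel)

theorem base6 : MakerWins (edg (Finset.univ : Finset (Fin 6))) (pth Finset.univ) false ∅ ∅ :=
  base_fin [(s(0, 1), s(0, 2)), (s(0, 3), s(1, 2)), (s(0, 4), s(3, 4)), (s(0, 5), s(3, 5)),
    (s(1, 3), s(2, 3)), (s(1, 4), s(1, 5)), (s(2, 4), s(2, 5))]
    [[0, 1, 2, 4, 3, 5], [0, 1, 2, 5, 3, 4], [0, 2, 1, 4, 3, 5], [0, 2, 1, 5, 3, 4],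
      [0, 4, 1, 2, 3, 5], [0, 4, 1, 3, 5, 2], [0, 4, 2, 1, 3, 5], [0, 4, 2, 3, 5, 1],
      [0, 5, 1, 2, 3, 4], [0, 5, 1, 3, 4, 2], [0, 5, 2, 1, 3, 4], [0, 5, 2, 3, 4, 1],
      [1, 4, 0, 3, 2, 5], [1, 4, 2, 0, 3, 5], [1, 4, 2, 3, 0, 5], [1, 5, 0, 3, 2, 4],
      [1, 5, 2, 0, 3, 4], [1, 5, 2, 3, 0, 4], [2, 4, 0, 3, 1, 5], [2, 4, 1, 0, 3, 5],
      [2, 4, 1, 3, 0, 5], [2, 5, 0, 3, 1, 4], [2, 5, 1, 0, 3, 4], [2, 5, 1, 3, 0, 4],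
      [3, 1, 2, 4, 0, 5], [3, 1, 2, 5, 0, 4], [3, 2, 1, 4, 0, 5], [3, 2, 1, 5, 0, 4],
      [0, 1, 4, 3, 5, 2], [0, 1, 5, 3, 4, 2], [0, 2, 4, 3, 5, 1], [0, 2, 5, 3, 4, 1],
      [3, 4, 1, 2, 0, 5], [3, 4, 2, 1, 0, 5], [3, 5, 1, 2, 0, 4], [3, 5, 2, 1, 0, 4]]
    (by decide +kernel) (by decide +kernel) (by decide +kernel) (by decide +kernel)
    (by decide +kernel)

theorem base_transfer {V : Type} [DecidableEq V] {k : ℕ} (S : Finset V) (hS : S.card = k)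
    (h : MakerWins (edg (Finset.univ : Finset (Fin k))) (pth Finset.univ) false ∅ ∅) :
    MakerWins (edg S) (pth S) false ∅ ∅ := by
  let g : Fin k → V := fun i => (S.equivFinOfCardEq hS).symm i
  have hg : Function.Injective g :=
    Subtype.val_injective.comp (S.equivFinOfCardEq hS).symm.injective
  have hr : ∀ y, (∃ i, g i = y) ↔ y ∈ S := by
    intro y
    constructor
    · rintro ⟨i, rfl⟩
      exact ((S.equivFinOfCardEq hS).symm i).2
    · intro hy
      exact ⟨S.equivFinOfCardEq hS ⟨y, hy⟩, by simp [g]⟩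
  have := mw_map (F' := pth S) (Sym2.map g) (Sym2.map.injective hg) (by
    rintro A ⟨l, h1, h2, h3⟩
    refine ⟨l.map g, h1.map hg, ?_, ?_⟩
    · intro x
      rw [← hr, List.mem_map]
      simp [h2]
    · rw [List.isChain_map]
      refine h3.imp ?_
      intro a b hab
      exact Finset.mem_image.2 ⟨_, hab, rfl⟩) h
  have he : (edg (Finset.univ : Finset (Fin k))).image (Sym2.map g) = edg S := by
    ext e
    induction e with | _ c d
    rw [Finset.mem_image, mem_edg]
    constructor
    · rintro ⟨e, he, hed⟩
      induction e with | _ i j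
      rw [mem_edg] at he
      rw [Sym2.map_mk, Sym2.eq_iff] at hed
      have h1 := (hr _).1 ⟨i, rfl⟩
      have h2 := (hr _).1 ⟨j, rfl⟩
      have h3 : g i ≠ g j := hg.ne he.2.2
      rcases hed with ⟨rfl, rfl⟩ | ⟨rfl, rfl⟩
      · exact ⟨h1, h2, h3⟩
      · exact ⟨h2, h1, h3.symm⟩
    · rintro ⟨hc, hd, hcd⟩
      obtain ⟨i, rfl⟩ := (hr c).2 hc
      obtain ⟨j, rfl⟩ := (hr d).2 hd
      refine ⟨s(i, j), mem_edg.2 ⟨by simp, by simp, ?_⟩, rfl⟩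
      rintro rfl
      exact hcd rfl
  rw [he] at this
  simpa using this

theorem maker_second {V : Type} [DecidableEq V] (n : ℕ) : 5 ≤ n → ∀ S : Finset V, S.card = n →
    MakerWins (edg S) (pth S) false ∅ ∅ := by
  induction n using Nat.strong_induction_on with
  | _ n ih =>
    intro hn S hS
    by_cases h5 : n = 5
    · subst h5
      exact base_transfer S hS base5
    by_cases h6 : n = 6
    · subst h6
      exact base_transfer S hS base6
    exact step (by omega) (fun T hT => ih (n - 2) (by omega) (by omega) T (by omega))

theorem walk_of_list {n : ℕ} (A : Finset (Sym2 (Fin n))) (l : List (Fin n)) : ∀ a,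
    (a :: l).Nodup → (a :: l).IsChain (fun a b => s(a, b) ∈ A) →
    ∃ (b : Fin n) (p : (⊤ : SimpleGraph (Fin n)).Walk a b),
      p.support = a :: l ∧ ∀ e ∈ p.edges, e ∈ A := by
  induction l with
  | nil => exact fun a _ _ => ⟨a, .nil, by simp, by simp⟩
  | cons c l ih =>
    intro a hn hc
    rw [List.isChain_cons_cons] at hc
    obtain ⟨h1, h2⟩ := List.nodup_cons.1 hn
    obtain ⟨b, p, hp, hpA⟩ := ih c h2 hc.2
    have hac : (⊤ : SimpleGraph (Fin n)).Adj a c := by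
      rw [SimpleGraph.top_adj]
      rintro rfl
      simp at h1
    refine ⟨b, .cons hac p, by simp [hp], ?_⟩
    intro e he
    rw [SimpleGraph.Walk.edges_cons, List.mem_cons] at he
    rcases he with rfl | he
    · exact hc.1
    · exact hpA e he

theorem pth_ham {n : ℕ} (hn : 0 < n) (A : Finset (Sym2 (Fin n)))
    (hA : A ∈ pth (Finset.univ : Finset (Fin n))) : ∃ A' ∈ HamPaths n, A' ⊆ A := by
  obtain ⟨l, h1, h2, h3⟩ := hA
  cases l with
  | nil => simpa using h2 ⟨0, hn⟩
  | cons a l =>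
    obtain ⟨b, p, hp, hpA⟩ := walk_of_list A l a h1 h3
    refine ⟨p.edges.toFinset, ⟨a, b, p, ?_, rfl⟩, ?_⟩
    · intro c
      rw [hp]
      exact List.count_eq_one_of_mem h1 (by simp [h2])
    · intro e he
      exact hpA e (by simpa using he)

theorem board_eq (n : ℕ) : Board n = edg Finset.univ := by
  ext e
  induction e with | _ a b
  simp [Board, mem_edg]

/-- Bounded game-tree evaluation (an upper bound for Maker's chances). -/
def mk {α : Type} [DecidableEq α] (X : List α) (W : Finset α → Bool) :
    ℕ → Bool → Finset α → Finset α → Bool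
  | 0, _, _, _ => true
  | k + 1, true, M, B => W M || X.any (fun e => !decide (e ∈ M) && (!decide (e ∈ B) &&
      mk X W k false (insert e M) B))
  | k + 1, false, M, B => W M || (X.any (fun e => !decide (e ∈ M) && !decide (e ∈ B)) &&
      X.all (fun e => decide (e ∈ M) || (decide (e ∈ B) || mk X W k true M (insert e B))))

theorem mk_spec {α : Type} [DecidableEq α] {X : Finset α} {F : Set (Finset α)} (X' : List α)
    (hX : ∀ e, e ∈ X' ↔ e ∈ X) (W : Finset α → Bool)
    (hW : ∀ A ∈ F, ∀ M, A ⊆ M → W M = true) {t : Bool} {M B : Finset α}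
    (h : MakerWins X F t M B) : ∀ k, mk X' W k t M B = true := by
  induction h with
  | @claim t M B A hA hAM =>
    intro k
    have := hW A hA M hAM
    cases k <;> cases t <;> simp [mk, this]
  | makerMove e he heM heB h ih =>
    intro k
    cases k with
    | zero => simp [mk]
    | succ k =>
      simp only [mk, Bool.or_eq_true, List.any_eq_true]
      exact Or.inr ⟨e, (hX e).2 he, by simp [heM, heB, ih k]⟩
  | @breakerMove M B e he heM heB h ih =>
    intro k
    cases k with
    | zero => simp [mk]
    | succ k =>
      simp only [mk, Bool.or_eq_true, Bool.and_eq_true, List.any_eq_true, List.all_eq_true]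
      refine Or.inr ⟨⟨e, (hX e).2 he, by simp [heM, heB]⟩, ?_⟩
      intro f hf
      by_cases h1 : f ∈ M
      · exact Or.inl (by simpa using h1)
      · by_cases h2 : f ∈ B
        · exact Or.inr (Or.inl (by simpa using h2))
        · exact Or.inr (Or.inr (ih f ((hX f).1 hf) h1 h2 k))

/-- Test for a Hamiltonian path on four vertices. -/
def W4 (M : Finset (Sym2 (Fin 4))) : Bool :=
  decide (∃ a b : Fin 4, s(a, b) ∈ M ∧ ∃ c, s(b, c) ∈ M ∧ ∃ d, s(c, d) ∈ M ∧ [a, b, c, d].Nodup)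

theorem W4_spec (A) (hA : A ∈ HamPaths 4) (M) (hAM : A ⊆ M) : W4 M = true := by
  obtain ⟨a, b, p, hp, rfl⟩ := hA
  have hlen : p.length = 3 := by simpa using hp.length_eq
  have hnd := hp.isPath.support_nodup
  rw [W4, decide_eq_true_eq]
  match p, hlen, hnd, hAM with
  | .cons (v := x) h1 (.cons (v := y) h2 (.cons h3 .nil)), _, hnd, hAM =>
    simp only [SimpleGraph.Walk.edges_cons, SimpleGraph.Walk.edges_nil,
      SimpleGraph.Walk.support_cons, SimpleGraph.Walk.support_nil] at hnd hAM
    exact ⟨a, x, hAM (by simp), y, hAM (by simp), b, hAM (by simp), hnd⟩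

theorem four : ¬ MakerWins (Board 4) (HamPaths 4) false ∅ ∅ := by
  intro h
  have := mk_spec [s(0, 1), s(2, 3), s(0, 2), s(1, 3), s(0, 3), s(1, 2)] (by decide +kernel)
    W4 W4_spec h 7
  revert this
  decide +kernel

end HPG

/-- In the Maker-Breaker Hamiltonian Path game on `E(K_n)` with `n ≥ 4`, Maker has a
winning strategy regardless of who moves first if and only if `n ≥ 5`. -/
theorem hamiltonian_path_game (n : ℕ) (hn : 4 ≤ n) :
    (MakerWinsFirst (Board n) (HamPaths n) ∧ MakerWinsSecond (Board n) (HamPaths n)) ↔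
      5 ≤ n := by
  constructor
  · rintro ⟨-, h⟩
    by_contra hlt
    obtain rfl : n = 4 := by omega
    exact four h
  · intro h5
    have h : MakerWins (Board n) (HamPaths n) false ∅ ∅ := by
      rw [board_eq]
      exact mw_family (pth_ham (by omega)) (maker_second n h5 Finset.univ (by simp))
    exact ⟨mw_mono_s3 h true ∅ ∅ (by simp) le_rfl (by simp), h⟩
end

section
/- In the Maker-Breaker Perfect Matching game on E(K_n) with n even (winning sets: perfect matchings of K_n), Maker wins as first or second player if and only if n ≥ 6, except that Maker also wins as first player when n = 2. -/
/-- Winning sets of the Perfect Matching game on `K_n`: perfect matchings, i.e. sets of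
non-loop edges such that every vertex lies in exactly one of them. -/
def PerfectMatchings (n : ℕ) : Set (Finset (Sym2 (Fin n))) :=
  {H | (∀ e ∈ H, ¬ e.IsDiag) ∧ ∀ v : Fin n, ∃! e, e ∈ H ∧ v ∈ e}

/-! ### General facts on Maker-Breaker games -/

/-- If Maker wins, then Maker's elements together with everything Breaker has not claimed
contain a winning set. -/
theorem MakerWins.exists_subset {α : Type} [DecidableEq α] {X : Finset α} {F : Set (Finset α)}
    {t : Bool} {M B : Finset α} (h : MakerWins X F t M B) :
    ∃ A ∈ F, ∀ a ∈ A, a ∈ M ∨ (a ∈ X ∧ a ∉ B) := by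
  induction h with
  | claim A hA hAM => exact ⟨A, hA, fun a ha => Or.inl (hAM ha)⟩
  | makerMove e he heM heB h ih =>
    obtain ⟨A, hA, hs⟩ := ih
    refine ⟨A, hA, fun a ha => ?_⟩
    rcases hs a ha with h1 | h1
    · rcases Finset.mem_insert.1 h1 with rfl | h2
      · exact Or.inr ⟨he, heB⟩
      · exact Or.inl h2
    · exact Or.inr h1
  | breakerMove e he heM heB h ih =>
    obtain ⟨A, hA, hs⟩ := ih e he heM heB
    refine ⟨A, hA, fun a ha => ?_⟩
    rcases hs a ha with h1 | ⟨h1, h2⟩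
    · exact Or.inl h1
    · exact Or.inr ⟨h1, fun h3 => h2 (Finset.mem_insert_of_mem h3)⟩

/-- Strategy transfer: a win in a game embedded (through `φ`) in a larger game gives a win in the
larger game, also if Maker has additional elements, Breaker has fewer elements,
or Maker moves in place of Breaker. -/
theorem MakerWins.transfer {α β : Type} [DecidableEq α] [DecidableEq β]
    {X : Finset α} {F : Set (Finset α)} {X' : Finset β} {F' : Set (Finset β)}
    (φ : α → β) (C : Finset β) (hX : ∀ a ∈ X, φ a ∈ X')
    (hinj : ∀ a ∈ X, ∀ b ∈ X, φ a = φ b → a = b)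
    (hF : ∀ A ∈ F, ∃ A' ∈ F', A' ⊆ A.image φ ∪ C)
    {t : Bool} {M B : Finset α} (h : MakerWins X F t M B) :
    ∀ (t' : Bool) (M' B' : Finset β), (t = true → t' = true) → C ⊆ M' →
      (∀ a ∈ M, φ a ∈ M') → (∀ b ∈ X, φ b ∈ B' → b ∈ B) → Disjoint M' B' →
      MakerWins X' F' t' M' B' := by
  have term : ∀ {t : Bool} {M B : Finset α}, MakerWins X F t M B →
      ∀ (t' : Bool) (M' B' : Finset β), C ⊆ M' →
      (∀ a ∈ M, φ a ∈ M') → (∀ b ∈ X, φ b ∈ B' → b ∈ B) →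
      (¬ ∃ x ∈ X', x ∉ M' ∧ x ∉ B') → MakerWins X' F' t' M' B' := by
    intro t M B h t' M' B' hC hM hB hno
    obtain ⟨A, hA, hs⟩ := h.exists_subset
    obtain ⟨A', hA', hsub⟩ := hF A hA
    refine MakerWins.claim A' hA' (hsub.trans (Finset.union_subset ?_ hC))
    intro y hy
    obtain ⟨a, ha, rfl⟩ := Finset.mem_image.1 hy
    rcases hs a ha with h1 | ⟨h1, h2⟩
    · exact hM a h1
    · by_contra hcon
      exact hno ⟨φ a, hX a h1, hcon, fun h3 => h2 (hB a h1 h3)⟩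
  induction h with
  | claim A hA hAM =>
    intro t' M' B' _ hC hM hB _
    obtain ⟨A', hA', hsub⟩ := hF A hA
    refine MakerWins.claim A' hA' (hsub.trans (Finset.union_subset ?_ hC))
    intro y hy
    obtain ⟨a, ha, rfl⟩ := Finset.mem_image.1 hy
    exact hM a (hAM ha)
  | @makerMove M B e he heM heB h ih =>
    intro t' M' B' ht hC hM hB hd
    obtain rfl := ht rfl
    by_cases hc : φ e ∈ M'
    · refine ih true M' B' (by simp) hC ?_ hB hd
      intro a ha
      rcases Finset.mem_insert.1 ha with rfl | h2
      · exact hc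
      · exact hM a h2
    · have hb : φ e ∉ B' := fun h3 => heB (hB e he h3)
      refine MakerWins.makerMove (φ e) (hX e he) hc hb ?_
      refine ih false _ B' (by simp) (hC.trans (Finset.subset_insert _ _)) ?_ hB ?_
      · intro a ha
        rcases Finset.mem_insert.1 ha with rfl | h2
        · exact Finset.mem_insert_self _ _
        · exact Finset.mem_insert_of_mem (hM a h2)
      · exact Finset.disjoint_insert_left.2 ⟨hb, hd⟩
  | @breakerMove M B e he heM heB h ih =>
    have key : ∀ M' B' : Finset β, C ⊆ M' → (∀ a ∈ M, φ a ∈ M') →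
        (∀ b ∈ X, φ b ∈ B' → b ∈ B) → Disjoint M' B' → MakerWins X' F' false M' B' := by
      intro M' B' hC hM hB hd
      by_cases hfree : ∃ x ∈ X', x ∉ M' ∧ x ∉ B'
      · obtain ⟨x, hx, hxM, hxB⟩ := hfree
        refine MakerWins.breakerMove x hx hxM hxB ?_
        intro f hf hfM hfB
        have hd' : Disjoint M' (insert f B') := Finset.disjoint_insert_right.2 ⟨hfM, hd⟩
        by_cases hg : ∃ g ∈ X, φ g = f ∧ g ∉ B
        · obtain ⟨g, hgX, rfl, hgB⟩ := hg
          refine ih g hgX (fun h1 => hfM (hM g h1)) hgB true M' _ (by simp) hC hM ?_ hd'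
          intro b hb hb'
          rcases Finset.mem_insert.1 hb' with h1 | h1
          · rw [hinj b hb g hgX h1]; exact Finset.mem_insert_self _ _
          · exact Finset.mem_insert_of_mem (hB b hb h1)
        · refine ih e he heM heB true M' _ (by simp) hC hM ?_ hd'
          intro b hb hb'
          rcases Finset.mem_insert.1 hb' with h1 | h1
          · by_contra hcon
            exact hg ⟨b, hb, h1, fun h2 => hcon (Finset.mem_insert_of_mem h2)⟩
          · exact Finset.mem_insert_of_mem (hB b hb h1)
      · exact term (MakerWins.breakerMove e he heM heB h) false M' B' hC hM hB hfree
    intro t' M' B' _ hC hM hB hd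
    cases t' with
    | false => exact key M' B' hC hM hB hd
    | true =>
      by_cases hfree : ∃ x ∈ X', x ∉ M' ∧ x ∉ B'
      · obtain ⟨x, hx, hxM, hxB⟩ := hfree
        refine MakerWins.makerMove x hx hxM hxB ?_
        exact key _ _ (hC.trans (Finset.subset_insert _ _))
          (fun a ha => Finset.mem_insert_of_mem (hM a ha)) hB
          (Finset.disjoint_insert_left.2 ⟨hxB, hd⟩)
      · exact term (MakerWins.breakerMove e he heM heB h) true M' B' hC hM hB hfree

/-- An extra move does not harm Maker. -/
theorem MakerWinsSecond.first {α : Type} [DecidableEq α] {X : Finset α} {F : Set (Finset α)}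
    (h : MakerWinsSecond X F) : MakerWinsFirst X F := by
  refine MakerWins.transfer id ∅ (by simp) (by simp) ?_ h true ∅ ∅ (by simp) (by simp) (by simp)
    (by simp) (by simp)
  intro A hA
  exact ⟨A, hA, by simp⟩

/-- Breaker's pairing strategy. -/
theorem not_makerWins_of_pairing {α : Type} [DecidableEq α] {X : Finset α} {F : Set (Finset α)}
    (p : α → α) (hpX : ∀ e ∈ X, p e ∈ X) (hpp : ∀ e ∈ X, p (p e) = e) (hpne : ∀ e ∈ X, p e ≠ e)
    (hF : ∀ A ∈ F, ∃ e ∈ A, e ∈ X ∧ p e ∈ A)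
    {t : Bool} {M B : Finset α} (h : MakerWins X F t M B) :
    Disjoint M B →
    (t = true → ∀ e ∈ X, e ∈ M → p e ∈ B) →
    (t = false → ∃ e₀ ∈ X, p e₀ ∉ M ∧ ∀ e ∈ X, e ∈ M → e ≠ e₀ → p e ∈ B) → False := by
  induction h with
  | @claim t M B A hA hAM =>
    intro hd h1 h2
    obtain ⟨e, heA, heX, hpe⟩ := hF A hA
    cases t with
    | true => exact Finset.disjoint_left.1 hd (hAM hpe) (h1 rfl e heX (hAM heA))
    | false =>
      obtain ⟨e₀, he₀, hp0, hall⟩ := h2 rfl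
      by_cases hc : e = e₀
      · subst hc; exact hp0 (hAM hpe)
      · exact Finset.disjoint_left.1 hd (hAM hpe) (hall e heX (hAM heA) hc)
  | @makerMove M B e he heM heB h ih =>
    intro hd h1 _
    refine ih (Finset.disjoint_insert_left.2 ⟨heB, hd⟩) (by simp) fun _ => ⟨e, he, ?_, ?_⟩
    · intro hc
      rcases Finset.mem_insert.1 hc with h3 | h3
      · exact hpne e he h3
      · have := h1 rfl _ (hpX e he) h3
        rw [hpp e he] at this
        exact heB this
    · intro a ha haM hne
      rcases Finset.mem_insert.1 haM with h3 | h3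
      · exact absurd h3 hne
      · exact h1 rfl a ha h3
  | @breakerMove M B e he heM heB h ih =>
    intro hd _ h2
    obtain ⟨e₀, he₀, hp0, hall⟩ := h2 rfl
    by_cases hc : p e₀ ∈ B
    · refine ih e he heM heB (Finset.disjoint_insert_right.2 ⟨heM, hd⟩) (fun _ a ha haM => ?_)
        (by simp)
      by_cases hae : a = e₀
      · subst hae; exact Finset.mem_insert_of_mem hc
      · exact Finset.mem_insert_of_mem (hall a ha haM hae)
    · refine ih (p e₀) (hpX _ he₀) hp0 hc (Finset.disjoint_insert_right.2 ⟨hp0, hd⟩)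
        (fun _ a ha haM => ?_) (by simp)
      by_cases hae : a = e₀
      · subst hae; exact Finset.mem_insert_self _ _
      · exact Finset.mem_insert_of_mem (hall a ha haM hae)

/-! ### The board -/

theorem mem_Board {n : ℕ} (e : Sym2 (Fin n)) : e ∈ Board n ↔ ¬ e.IsDiag := by
  simp [Board]

theorem mk_mem_Board {n : ℕ} {x y : Fin n} : s(x, y) ∈ Board n ↔ x ≠ y := by
  simp [Board]

/-! ### The case `n = 4` -/

/-- The complementary edge in `K_4`. -/
def opp (e : Sym2 (Fin 4)) : Sym2 (Fin 4) :=
  if e = s(0, 1) then s(2, 3) else if e = s(2, 3) then s(0, 1) else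
  if e = s(0, 2) then s(1, 3) else if e = s(1, 3) then s(0, 2) else
  if e = s(0, 3) then s(1, 2) else if e = s(1, 2) then s(0, 3) else e

theorem PM4 (A : Finset (Sym2 (Fin 4))) (hA : A ∈ PerfectMatchings 4) :
    ∃ e ∈ A, e ∈ Board 4 ∧ opp e ∈ A := by
  obtain ⟨hd, hv⟩ := hA
  have edge : ∀ v : Fin 4, ∃ w, v ≠ w ∧ s(v, w) ∈ A := by
    intro v
    obtain ⟨e, ⟨he, hve⟩, _⟩ := hv v
    obtain ⟨w, rfl⟩ := Sym2.mem_iff_exists.1 hve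
    exact ⟨w, by simpa using hd _ he, he⟩
  have uniq : ∀ v x y : Fin 4, s(v, x) ∈ A → s(v, y) ∈ A → x = y := by
    intro v x y hx hy
    have := (hv v).unique ⟨hx, Sym2.mem_mk_left _ _⟩ ⟨hy, Sym2.mem_mk_left _ _⟩
    exact Sym2.congr_right.1 this
  have main : ∀ a b c : Fin 4, 0 ≠ a → b ≠ 0 → b ≠ a → b ≠ c → s(0, a) ∈ A → s(b, c) ∈ A →
      opp s(0, a) = s(b, c) := by
    intro a b c h0 h1 h2 h3 h4 h5
    have hc0 : c ≠ 0 := by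
      rintro rfl
      rw [Sym2.eq_swap] at h5
      exact h2 (uniq 0 b a h5 h4)
    have hca : c ≠ a := by
      rintro rfl
      rw [Sym2.eq_swap] at h5 h4
      exact h1 (uniq c b 0 h5 h4)
    clear h4 h5
    revert a b c
    decide
  obtain ⟨a, h0a, ha⟩ := edge 0
  obtain ⟨b, hb0, hba⟩ : ∃ b : Fin 4, b ≠ 0 ∧ b ≠ a := by
    clear ha h0a main
    revert a; decide
  obtain ⟨c, hbc, hc⟩ := edge b
  have hm := main a b c h0a hb0 hba hbc ha hc
  refine ⟨s(0, a), ha, mk_mem_Board.2 h0a, by rw [hm]; exact hc⟩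

theorem not_first_four : ¬ MakerWinsFirst (Board 4) (PerfectMatchings 4) := by
  intro h
  refine not_makerWins_of_pairing opp ?_ ?_ ?_ PM4 h (by simp) (by simp) (by simp)
  · intro e; rw [mem_Board, mem_Board]; revert e; decide
  · intro e _; revert e; decide
  · intro e; rw [mem_Board]; revert e; decide

/-! ### The case `n = 2` -/

theorem two_edge (e : Sym2 (Fin 2)) (he : e ∈ Board 2) : e = s(0, 1) := by
  rw [mem_Board] at he
  revert e; decide

theorem first_two : MakerWinsFirst (Board 2) (PerfectMatchings 2) := by
  refine MakerWins.makerMove s(0, 1) (mk_mem_Board.2 (by decide)) (by simp) (by simp) ?_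
  refine MakerWins.claim {s(0, 1)} ⟨by simp, ?_⟩ (by simp)
  intro v
  refine ⟨s(0, 1), ⟨by simp, ?_⟩, fun y hy => by simpa using hy.1⟩
  revert v; decide

theorem empty_not_PM {n : ℕ} (hn : 0 < n) {A : Finset (Sym2 (Fin n))}
    (hA : A ∈ PerfectMatchings n) (h : A ⊆ ∅) : False := by
  obtain ⟨e, ⟨he, _⟩, _⟩ := hA.2 ⟨0, hn⟩
  exact absurd (h he) (by simp)

theorem not_second_two : ¬ MakerWinsSecond (Board 2) (PerfectMatchings 2) := by
  intro h
  cases h with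
  | claim A hA hAM => exact empty_not_PM (by norm_num) hA hAM
  | breakerMove e he heM heB h =>
    have h2 := h e he heM heB
    cases h2 with
    | claim A hA hAM => exact empty_not_PM (by norm_num) hA hAM
    | makerMove e' he' heM' heB' h' =>
      rw [two_edge e he, two_edge e' he'] at heB'
      exact heB' (by simp)

/-! ### The induction step -/

theorem second_step (n : ℕ) (hn : 1 ≤ n) (h : MakerWinsSecond (Board n) (PerfectMatchings n)) :
    MakerWinsSecond (Board (n + 2)) (PerfectMatchings (n + 2)) := by
  refine MakerWins.breakerMove s(0, 1) (mk_mem_Board.2 (by simp)) (by simp) (by simp) ?_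
  intro f hf _ _
  induction f using Sym2.ind with
  | _ x y =>
  have hxy : x ≠ y := mk_mem_Board.1 hf
  obtain ⟨z, hz⟩ : ∃ z : Fin (n + 2), z ∉ ({x, y} : Finset (Fin (n + 2))) := by
    by_contra hcon
    push Not at hcon
    have h1 : (Finset.univ : Finset (Fin (n + 2))).card ≤ ({x, y} : Finset (Fin (n + 2))).card :=
      Finset.card_le_card fun z _ => hcon z
    have h2 := Finset.card_le_two (a := x) (b := y)
    simp at h1
    omega
  have hzx : z ≠ x := by rintro rfl; simp at hz
  have hzy : z ≠ y := by rintro rfl; simp at hz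
  have hcard : (({x, z} : Finset (Fin (n + 2)))ᶜ).card = n := by
    rw [Finset.card_compl, Finset.card_pair hzx.symm]; simp
  let ψ := (({x, z} : Finset (Fin (n + 2)))ᶜ).orderEmbOfFin hcard
  have hψinj : Function.Injective ψ := ψ.injective
  have hψ : ∀ i, ψ i ≠ x ∧ ψ i ≠ z := by
    intro i
    have := Finset.orderEmbOfFin_mem _ hcard i
    rw [Finset.mem_compl, Finset.mem_insert, Finset.mem_singleton, not_or] at this
    exact this
  have hψs : ∀ v, v ≠ x → v ≠ z → ∃ i, ψ i = v := by
    intro v h1 h2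
    have : v ∈ Set.range ψ := by
      rw [Finset.range_orderEmbOfFin]
      simp [h1, h2]
    exact this
  have hnx : ∀ e : Sym2 (Fin n), x ∉ e.map ψ ∧ z ∉ e.map ψ := by
    intro e
    constructor
    · intro hc
      obtain ⟨i, _, hi⟩ := Sym2.mem_map.1 hc
      exact (hψ i).1 hi
    · intro hc
      obtain ⟨i, _, hi⟩ := Sym2.mem_map.1 hc
      exact (hψ i).2 hi
  refine MakerWins.makerMove s(x, z) (mk_mem_Board.2 hzx.symm) (by simp) ?_ ?_
  · simp only [insert_empty_eq, Finset.mem_singleton]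
    intro hc
    have : z ∈ s(x, y) := by rw [← hc]; exact Sym2.mem_mk_right _ _
    rcases Sym2.mem_iff.1 this with h | h
    · exact hzx h
    · exact hzy h
  refine MakerWins.transfer (Sym2.map ψ) {s(x, z)} ?_ ?_ ?_ h false _ _ (by simp) (by simp)
    (by simp) ?_ ?_
  · intro a ha
    rw [mem_Board] at ha ⊢
    rwa [Sym2.isDiag_map hψinj]
  · intro a _ b _ hab
    exact Sym2.map.injective hψinj hab
  · intro A hA
    refine ⟨_, ⟨?_, ?_⟩, Finset.Subset.refl _⟩
    · intro e he
      rcases Finset.mem_union.1 he with h1 | h1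
      · obtain ⟨a, ha, rfl⟩ := Finset.mem_image.1 h1
        rw [Sym2.isDiag_map hψinj]
        exact hA.1 a ha
      · rw [Finset.mem_singleton] at h1
        subst h1
        simpa using hzx.symm
    · intro v
      by_cases hv : v = x ∨ v = z
      · refine ⟨s(x, z), ⟨by simp, Sym2.mem_iff.2 hv⟩, ?_⟩
        rintro e ⟨he, hve⟩
        rcases Finset.mem_union.1 he with h1 | h1
        · obtain ⟨a, ha, rfl⟩ := Finset.mem_image.1 h1
          rcases hv with rfl | rfl
          · exact absurd hve (hnx a).1
          · exact absurd hve (hnx a).2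
        · exact Finset.mem_singleton.1 h1
      · push Not at hv
        obtain ⟨i, rfl⟩ := hψs v hv.1 hv.2
        obtain ⟨a, ⟨ha, hia⟩, hu⟩ := hA.2 i
        refine ⟨a.map ψ, ⟨Finset.mem_union_left _ (Finset.mem_image_of_mem _ ha),
          Sym2.mem_map.2 ⟨i, hia, rfl⟩⟩, ?_⟩
        rintro e ⟨he, hve⟩
        rcases Finset.mem_union.1 he with h1 | h1
        · obtain ⟨b, hb, rfl⟩ := Finset.mem_image.1 h1
          obtain ⟨j, hj, hji⟩ := Sym2.mem_map.1 hve
          rw [hψinj hji] at hj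
          rw [hu b ⟨hb, hj⟩]
        · rw [Finset.mem_singleton] at h1
          subst h1
          rcases Sym2.mem_iff.1 hve with h | h
          · exact absurd h hv.1
          · exact absurd h hv.2
  · intro b _ hb
    simp only [insert_empty_eq, Finset.mem_singleton] at hb
    exact absurd (by rw [hb]; exact Sym2.mem_mk_left _ _) (hnx b).1
  · simp only [insert_empty_eq, Finset.disjoint_singleton]
    intro hc
    have : z ∈ s(x, y) := by rw [← hc]; exact Sym2.mem_mk_right _ _
    rcases Sym2.mem_iff.1 this with h | h
    · exact hzx h
    · exact hzy h

/-! ### The base case `n = 6` -/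

/-- Strategies for Maker in a game on natural numbers: announce a winning set, claim an element,
or branch according to whether Breaker has claimed a given element. -/
inductive Strat
  | leaf (a b c : ℕ)
  | move (e : ℕ) (s : Strat)
  | ite (g : ℕ) (s t : Strat)

/-- The perfect matchings of `K_6`, with edges numbered lexicographically. -/
def triples : List (List ℕ) :=
  [[0, 9, 14], [0, 10, 13], [0, 11, 12], [1, 6, 14], [1, 7, 13], [1, 8, 12], [2, 5, 14],
   [2, 7, 11], [2, 8, 10], [3, 5, 13], [3, 6, 11], [3, 8, 9], [4, 5, 12], [4, 6, 10], [4, 7, 9]]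

/-- The strategy wins from the given position, Maker to move. -/
def Strat.check : Strat → List ℕ → List ℕ → Bool
  | .leaf a b c, M, _ => triples.elem [a, b, c] && M.elem a && M.elem b && M.elem c
  | .move e s, M, B => Nat.blt e 15 && !M.elem e && !B.elem e &&
      (List.range 15).any (fun f => !(e :: M).elem f && !B.elem f) &&
      (List.range 15).all (fun f => (e :: M).elem f || B.elem f || s.check (e :: M) (f :: B))
  | .ite g s t, M, B => if B.elem g then s.check M B else t.check M B

/-- The abstract version of the game on `K_6`. -/
def tripleSets : Set (Finset ℕ) := {A | ∃ l ∈ triples, A = l.toFinset}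

theorem Strat.check_sound (s : Strat) : ∀ M B : List ℕ, s.check M B = true →
    MakerWins (Finset.range 15) tripleSets true M.toFinset B.toFinset := by
  induction s with
  | leaf a b c =>
    intro M B h
    simp only [Strat.check, Bool.and_eq_true, List.elem_eq_mem, decide_eq_true_eq] at h
    refine MakerWins.claim [a, b, c].toFinset ⟨_, h.1.1.1, rfl⟩ ?_
    intro x hx
    simp only [List.mem_toFinset, List.mem_cons, List.not_mem_nil, or_false] at hx ⊢
    rcases hx with rfl | rfl | rfl
    · exact h.1.1.2
    · exact h.1.2
    · exact h.2
  | move e s ih =>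
    intro M B h
    simp only [Strat.check, Bool.and_eq_true, Bool.not_eq_true', List.elem_eq_mem,
      decide_eq_false_iff_not, Nat.blt_eq, List.any_eq_true, List.all_eq_true, Bool.or_eq_true,
      decide_eq_true_eq, List.mem_range] at h
    obtain ⟨⟨⟨⟨he, heM⟩, heB⟩, ⟨g, hg, hgM, hgB⟩⟩, hall⟩ := h
    refine MakerWins.makerMove e (by simpa using he) (by simpa using heM) (by simpa using heB) ?_
    rw [← List.toFinset_cons]
    refine MakerWins.breakerMove g (by simpa using hg) (by rwa [List.mem_toFinset])
      (by rwa [List.mem_toFinset]) ?_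
    intro f hf hfM hfB
    rw [List.mem_toFinset] at hfM hfB
    rw [← List.toFinset_cons]
    rcases hall f (by simpa using hf) with (h1 | h1) | h1
    · exact absurd h1 hfM
    · exact absurd h1 hfB
    · exact ih _ _ h1
  | ite g s t ihs iht =>
    intro M B h
    simp only [Strat.check] at h
    split at h
    · exact ihs _ _ h
    · exact iht _ _ h

/-- Claim `x`, then complete one of the matchings `{a, x, p}`, `{b, x, q}`. -/
def dbl (a b x p q : ℕ) : Strat :=
  .move x (.ite p (.move q (.leaf b x q)) (.move p (.leaf a x p)))

/-- The same as `dbl`, with the winning sets listed in another order. -/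
def dbl2 (a b x p q : ℕ) : Strat :=
  .move x (.ite p (.move q (.leaf b q x)) (.move p (.leaf a p x)))

/-- Maker owns `1` and claims `b`; then makes the double threat `s`, or `t` if Breaker
interferes with `s` by one of `i`, `j`, `k`. -/
def two (b i j k : ℕ) (t s : Strat) : Strat :=
  .move b (.ite i t (.ite j t (.ite k t s)))

/-- Maker's strategy on `K_6` after Breaker has claimed edge number `0`. -/
def strat6 : Strat :=
  let u := two 2 13 11 7 (dbl 1 2 8 12 10) (dbl 1 2 7 13 11)
  let v := two 2 14 6 5 (dbl 1 2 8 12 10) (dbl2 1 2 14 6 5)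
  .move 1 (.ite 14 u (.ite 13 v (.ite 11 v (.ite 7 v (.ite 6 u (.ite 5 u
    (.ite 2 (two 3 14 11 6 (dbl 1 3 8 12 9) (dbl 1 3 6 14 11))
      (two 2 14 6 5 (dbl 1 2 7 13 11) (dbl2 1 2 14 6 5)))))))))

theorem strat6_check : strat6.check [] [0] = true := by decide +kernel

/-- The edges of `K_6`. -/
def edge6 : ℕ → Sym2 (Fin 6)
  | 0 => s(0, 1) | 1 => s(0, 2) | 2 => s(0, 3) | 3 => s(0, 4) | 4 => s(0, 5)
  | 5 => s(1, 2) | 6 => s(1, 3) | 7 => s(1, 4) | 8 => s(1, 5)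
  | 9 => s(2, 3) | 10 => s(2, 4) | 11 => s(2, 5)
  | 12 => s(3, 4) | 13 => s(3, 5) | _ => s(4, 5)

theorem edge6_PM : ∀ l ∈ triples, (∀ e ∈ l.toFinset.image edge6, ¬ e.IsDiag) ∧
    ∀ v : Fin 6, ∃ e ∈ l.toFinset.image edge6, v ∈ e ∧
      ∀ e' ∈ l.toFinset.image edge6, v ∈ e' → e' = e := by
  decide +kernel

theorem first_six_std : MakerWins (Board 6) (PerfectMatchings 6) true ∅ {s(0, 1)} := by
  refine MakerWins.transfer edge6 ∅ ?_ ?_ ?_ (strat6.check_sound _ _ strat6_check) true _ _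
    (by simp) (by simp) (by simp) ?_ (by simp)
  · intro a ha
    rw [mem_Board]
    revert a; decide +kernel
  · decide +kernel
  · rintro A ⟨l, hl, rfl⟩
    refine ⟨_, ⟨(edge6_PM l hl).1, fun v => ?_⟩, Finset.subset_union_left⟩
    obtain ⟨e, he, hve, hu⟩ := (edge6_PM l hl).2 v
    exact ⟨e, ⟨he, hve⟩, fun e' h => hu e' h.1 h.2⟩
  · decide +kernel

theorem PM_perm {n : ℕ} (σ : Equiv.Perm (Fin n)) {A : Finset (Sym2 (Fin n))}
    (hA : A ∈ PerfectMatchings n) : A.image (Sym2.map σ) ∈ PerfectMatchings n := by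
  refine ⟨?_, fun v => ?_⟩
  · intro e he
    obtain ⟨a, ha, rfl⟩ := Finset.mem_image.1 he
    rw [Sym2.isDiag_map σ.injective]
    exact hA.1 a ha
  · obtain ⟨i, rfl⟩ := σ.surjective v
    obtain ⟨a, ⟨ha, hia⟩, hu⟩ := hA.2 i
    refine ⟨a.map σ, ⟨Finset.mem_image_of_mem _ ha, Sym2.mem_map.2 ⟨i, hia, rfl⟩⟩, ?_⟩
    rintro e ⟨he, hve⟩
    obtain ⟨b, hb, rfl⟩ := Finset.mem_image.1 he
    obtain ⟨j, hj, hji⟩ := Sym2.mem_map.1 hve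
    rw [σ.injective hji] at hj
    rw [hu b ⟨hb, hj⟩]

theorem exists_perm6 (x y : Fin 6) (h : x ≠ y) : ∃ σ : Equiv.Perm (Fin 6), σ 0 = x ∧ σ 1 = y := by
  refine ⟨(Equiv.swap 0 x).trans (Equiv.swap (Equiv.swap 0 x 1) y), ?_⟩
  revert x y; decide

theorem second_six : MakerWinsSecond (Board 6) (PerfectMatchings 6) := by
  refine MakerWins.breakerMove s(0, 1) (mk_mem_Board.2 (by simp)) (by simp) (by simp) ?_
  intro f hf _ _
  induction f using Sym2.ind with
  | _ x y =>
  obtain ⟨σ, h0, h1⟩ := exists_perm6 x y (mk_mem_Board.1 hf)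
  refine MakerWins.transfer (Sym2.map σ) ∅ ?_ ?_ ?_ first_six_std true _ _ (by simp) (by simp)
    (by simp) ?_ (by simp)
  · intro a ha
    rw [mem_Board] at ha ⊢
    rwa [Sym2.isDiag_map σ.injective]
  · intro a _ b _ hab
    exact Sym2.map.injective σ.injective hab
  · intro A hA
    exact ⟨_, PM_perm σ hA, Finset.subset_union_left⟩
  · intro b _ hb
    simp only [insert_empty_eq, Finset.mem_singleton] at hb ⊢
    apply Sym2.map.injective σ.injective
    rw [hb, Sym2.map_mk, h0, h1]

theorem second_ge_six (k : ℕ) :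
    MakerWinsSecond (Board (6 + 2 * k)) (PerfectMatchings (6 + 2 * k)) := by
  induction k with
  | zero => exact second_six
  | succ k ih => exact second_step (6 + 2 * k) (by omega) ih

/-- In the Maker-Breaker Perfect Matching game on `E(K_n)` with `n ≥ 2` even, Maker as
first player wins iff `n ≥ 6` or `n = 2`, and Maker as second player wins iff `n ≥ 6`. -/
theorem perfect_matching_game (n : ℕ) (hev : Even n) (hn : 2 ≤ n) :
    (MakerWinsFirst (Board n) (PerfectMatchings n) ↔ (6 ≤ n ∨ n = 2)) ∧
    (MakerWinsSecond (Board n) (PerfectMatchings n) ↔ 6 ≤ n) := by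
  have hfour : n = 2 ∨ n = 4 ∨ 6 ≤ n := by
    obtain ⟨k, rfl⟩ := hev
    omega
  rcases hfour with rfl | rfl | h6
  · exact ⟨⟨fun _ => Or.inr rfl, fun _ => first_two⟩,
      ⟨fun h => absurd h not_second_two, fun h => absurd h (by norm_num)⟩⟩
  · exact ⟨⟨fun h => absurd h not_first_four, fun h => absurd h (by norm_num)⟩,
      ⟨fun h => absurd h.first not_first_four, fun h => absurd h (by norm_num)⟩⟩
  · have hs : MakerWinsSecond (Board n) (PerfectMatchings n) := by
      obtain ⟨k, rfl⟩ := hev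
      obtain ⟨m, hm⟩ : ∃ m, k + k = 6 + 2 * m := ⟨k - 3, by omega⟩
      rw [hm]
      exact second_ge_six m
    exact ⟨⟨fun _ => Or.inl h6, fun _ => hs.first⟩, ⟨fun _ => h6, fun _ => hs⟩⟩
end

section
/- In the Maker-Breaker Hamiltonicity game on E(K_n) with n ∈ {4,5,6,7}, Breaker has a winning strategy regardless of who moves first. -/
/-- `BreakerWins X F t M B` : from the position where Maker has claimed `M`, Breaker has
claimed `B`, and it is Maker's turn iff `t = true`, Breaker has a winning strategy
(he can ensure that he claims an element of every winning set). -/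
inductive BreakerWins {α : Type} [DecidableEq α] (X : Finset α) (F : Set (Finset α)) :
    Bool → Finset α → Finset α → Prop
  | block {t : Bool} {M B : Finset α} (h : ∀ A ∈ F, ∃ e ∈ A, e ∈ B) : BreakerWins X F t M B
  | breakerMove {M B : Finset α} (e : α) (he : e ∈ X) (heM : e ∉ M) (heB : e ∉ B)
      (h : BreakerWins X F true M (insert e B)) : BreakerWins X F false M B
  | makerMove {M B : Finset α} (e : α) (he : e ∈ X) (heM : e ∉ M) (heB : e ∉ B)
      (h : ∀ f ∈ X, f ∉ M → f ∉ B → BreakerWins X F false (insert f M) B) :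
      BreakerWins X F true M B

/-- Breaker, moving first, has a winning strategy in the game `(X, F)`. -/
def BreakerWinsFirst {α : Type} [DecidableEq α] (X : Finset α) (F : Set (Finset α)) : Prop :=
  BreakerWins X F false ∅ ∅

/-- Breaker, moving second (Maker moves first), has a winning strategy in `(X, F)`. -/
def BreakerWinsSecond {α : Type} [DecidableEq α] (X : Finset α) (F : Set (Finset α)) : Prop :=
  BreakerWins X F true ∅ ∅

namespace HamGame

/-- Entry `(i, j)` of the 0/1 matrix coded by `m`. -/
def has (m i j : ℕ) : Bool := Nat.beq (m / 2 ^ (8 * i + j) % 2) 1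

/-- The `i`-th entry of the map coded by `p`. -/
def pm (n p i : ℕ) : ℕ := p / 8 ^ i % 8 % n

/-- Bounded universal quantifier. -/
def allB : ℕ → (ℕ → Bool) → Bool
  | 0, _ => true
  | k + 1, f => f k && allB k f

theorem allB_spec {k : ℕ} {f : ℕ → Bool} (h : allB k f = true) : ∀ i < k, f i = true := by
  induction k with
  | zero => intro i hi; omega
  | succ k ih =>
    simp only [allB, Bool.and_eq_true] at h
    intro i hi
    rcases Nat.lt_succ_iff_lt_or_eq.mp hi with h1 | h1
    · exact ih h.2 i h1
    · subst h1; exact h.1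

/-- Is `{a, b} = {x, y}`? -/
def same (x y a b : ℕ) : Bool :=
  (Nat.beq a x && Nat.beq b y) || (Nat.beq a y && Nat.beq b x)

/-- No Hamiltonian cycle avoiding `blk` extends the current partial path. -/
def search (n : ℕ) (blk : ℕ → ℕ → Bool) (start : ℕ) : ℕ → ℕ → List ℕ → Bool
  | 0, cur, _ => blk cur start
  | k + 1, cur, vis => allB n fun v =>
      vis.any (Nat.beq v) || (blk cur v || search n blk start k v (v :: vis))

theorem search_spec {n : ℕ} {blk : ℕ → ℕ → Bool} {start : ℕ} (l : List ℕ) :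
    ∀ (cur : ℕ) (vis : List ℕ), search n blk start l.length cur vis = true →
      (∀ v ∈ l, v < n ∧ v ∉ vis) → l.Nodup →
      ¬ List.IsChain (fun a b => blk a b = false) (cur :: (l ++ [start])) := by
  induction l with
  | nil =>
    intro cur vis h _ _ hc
    simp [search] at h hc
    simp [h] at hc
  | cons v l ih =>
    intro cur vis h hv hn hc
    simp only [List.length_cons, search] at h
    have hv0 := hv v (by simp)
    have h1 := allB_spec h v hv0.1
    rw [List.cons_append, List.isChain_cons_cons] at hc
    have h2 : vis.any (Nat.beq v) = false := by
      rw [List.any_eq_false]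
      intro w hw hb
      rw [Nat.beq_eq] at hb
      exact hv0.2 (hb ▸ hw)
    rw [h2, hc.1] at h1
    simp only [Bool.false_or] at h1
    rw [List.nodup_cons] at hn
    refine ih v (v :: vis) h1 ?_ hn.2 hc.2
    intro w hw
    have := hv w (by simp [hw])
    refine ⟨this.1, ?_⟩
    simp only [List.mem_cons, not_or]
    refine ⟨?_, this.2⟩
    rintro rfl
    exact hn.1 hw

theorem chain_support {V : Type} {G : SimpleGraph V} {a b : V} (p : G.Walk a b) :
    List.IsChain (fun u v => s(u, v) ∈ p.edges) p.support := by
  induction p with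
  | nil => simp
  | cons h q ih =>
    rw [SimpleGraph.Walk.support_cons]
    have h2 := ih.imp (S := fun u v => s(u, v) ∈ (SimpleGraph.Walk.cons h q).edges)
      (fun u v huv => by simp [huv])
    rw [SimpleGraph.Walk.support_eq_cons] at h2 ⊢
    rw [List.isChain_cons_cons]
    exact ⟨by simp, h2⟩

/-- All Hamiltonian cycles meet `blk`. -/
def blocked (n : ℕ) (blk : ℕ → ℕ → Bool) : Bool :=
  allB n fun s => search n blk s (n - 1) s [s]

theorem blocked_spec {n : ℕ} {blk : ℕ → ℕ → Bool} (h : blocked n blk = true)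
    (σ : Equiv.Perm (Fin n)) (B : Finset (Sym2 (Fin n)))
    (hB : ∀ i j : Fin n, blk i j = true → s(σ i, σ j) ∈ B) :
    ∀ A ∈ HamCycles n, ∃ e ∈ A, e ∈ B := by
  rintro A ⟨a, p, hp, rfl⟩
  by_contra hcon
  push Not at hcon
  have hch := chain_support p
  have hlen : p.support.length = n + 1 := by
    rw [SimpleGraph.Walk.length_support, hp.length_eq, Fintype.card_fin]
  have hnd := hp.isCycle.support_nodup
  obtain ⟨l, hl⟩ : ∃ l, p.support = a :: (l ++ [a]) := by
    have h1 := SimpleGraph.Walk.support_eq_cons p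
    have hne : p.support.tail ≠ [] := by
      intro h0
      rw [h1, h0] at hlen
      have := a.2
      simp at hlen
      omega
    refine ⟨p.support.tail.dropLast, ?_⟩
    have h2 := List.dropLast_append_getLast hne
    have h3 : p.support.tail.getLast hne = a := by
      rw [List.getLast_tail]; exact SimpleGraph.Walk.getLast_support p
    rw [h3] at h2
    rw [h2]; exact h1
  rw [hl] at hch hlen hnd
  simp only [List.tail_cons] at hnd
  have hlen2 : l.length = n - 1 := by simp at hlen; omega
  let g : Fin n → ℕ := fun x => (σ.symm x : Fin n)
  have hg : Function.Injective g := fun x y hxy => σ.symm.injective (Fin.ext hxy)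
  have hs := allB_spec h (g a) (σ.symm a).2
  have hl3 : (l.map g).length = n - 1 := by simpa using hlen2
  rw [← hl3] at hs
  rw [List.nodup_append] at hnd
  refine search_spec (l.map g) _ _ hs ?_ (hnd.1.map hg) ?_
  · intro v hv
    rw [List.mem_map] at hv
    obtain ⟨w, hw, rfl⟩ := hv
    refine ⟨(σ.symm w).2, ?_⟩
    rw [List.mem_singleton]
    intro h0
    exact hnd.2.2 w hw a (by simp) (hg h0)
  · have : g a :: (l.map g ++ [g a]) = (a :: (l ++ [a])).map g := by simp
    rw [this, List.isChain_map]
    refine hch.imp ?_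
    intro u v huv
    by_contra hne
    rw [Bool.not_eq_false] at hne
    have h5 := hB (σ.symm u) (σ.symm v) hne
    simp only [Equiv.apply_symm_apply] at h5
    exact hcon _ (by simpa using huv) h5

/-- Reference to a later node of the list, through a vertex map; `img` is the image of its
carrier. -/
structure Ref where
  idx : ℕ
  perm : ℕ
  img : ℕ

/-- A position (Breaker owns `B`, no Maker edge in the carrier `S`) where Breaker, to move,
wins by claiming `xy`; he continues with one of `refs` whose carrier avoids Maker's reply. -/
structure Node where
  B : ℕ
  S : ℕ
  x : ℕ
  y : ℕ
  refs : List Ref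

/-- Check of a single reference. -/
def checkRef (n : ℕ) (nd : Node) (rest : List Node) (r : Ref) : Bool :=
  match rest[r.idx]? with
  | none => false
  | some c =>
    allB n fun i => allB n fun j =>
      (Nat.beq i j || !Nat.beq (pm n r.perm i) (pm n r.perm j)) &&
      ((!has c.B i j || (has nd.B (pm n r.perm i) (pm n r.perm j) ||
        same nd.x nd.y (pm n r.perm i) (pm n r.perm j))) &&
      ((!has c.S i j || has r.img (pm n r.perm i) (pm n r.perm j)) &&
      (!has r.img i j || (has nd.S i j && !same nd.x nd.y i j))))

/-- Check of a single node. -/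
def checkNode (n : ℕ) (nd : Node) (rest : List Node) : Bool :=
  (Nat.blt nd.x nd.y && (Nat.blt nd.y n && has nd.S nd.x nd.y)) &&
  match nd.refs with
  | [] => blocked n fun i j => has nd.B i j || same nd.x nd.y i j
  | r :: rs =>
    (r :: rs).all (checkRef n nd rest) &&
    allB n fun a => allB n fun b =>
      (r :: rs).any fun q => !has q.img a b && !has q.img b a

/-- Check of a whole certificate. -/
def checkAll (n : ℕ) : List Node → Bool
  | [] => true
  | nd :: rest => checkNode n nd rest && checkAll n rest

/-- The meaning of a node. -/
def Good (n : ℕ) (nd : Node) : Prop :=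
  (∃ c d : Fin n, c ≠ d ∧ has nd.S c d = true) ∧
  ∀ (σ : Equiv.Perm (Fin n)) (M B : Finset (Sym2 (Fin n))),
    (∀ i j : Fin n, has nd.B i j = true → s(σ i, σ j) ∈ B) →
    (∀ i j : Fin n, has nd.S i j = true → s(σ i, σ j) ∉ M ∧ s(σ i, σ j) ∉ B) →
    BreakerWins (Board n) (HamCycles n) false M B

theorem mem_board {n : ℕ} {a b : Fin n} : s(a, b) ∈ Board n ↔ a ≠ b := by
  simp [Board]

theorem same_spec {n : ℕ} {x y a b : Fin n} (h : same x y a b = true) : s(a, b) = s(x, y) := by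
  simp only [same, Bool.or_eq_true, Bool.and_eq_true, Nat.beq_eq] at h
  rw [Sym2.eq_iff]
  simpa only [Fin.ext_iff] using h

theorem same_of_eq {n : ℕ} {x y a b : Fin n} (h : s(a, b) = s(x, y)) : same x y a b = true := by
  simp only [same, Bool.or_eq_true, Bool.and_eq_true, Nat.beq_eq]
  rw [Sym2.eq_iff] at h
  simpa only [Fin.ext_iff] using h

theorem map_eq {n : ℕ} (σ : Equiv.Perm (Fin n)) {a b c d : Fin n} :
    s(σ a, σ b) = s(σ c, σ d) ↔ s(a, b) = s(c, d) := by
  simp only [Sym2.eq_iff, σ.injective.eq_iff]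

theorem checkRef_spec {n : ℕ} (hn : 0 < n) {nd : Node} {rest : List Node} {r : Ref}
    (h : checkRef n nd rest r = true) :
    ∃ c ∈ rest, ∃ τ : Equiv.Perm (Fin n),
      (∀ i j : Fin n, has c.B i j = true →
        has nd.B (τ i) (τ j) = true ∨ same nd.x nd.y (τ i) (τ j) = true) ∧
      (∀ i j : Fin n, has c.S i j = true → has r.img (τ i) (τ j) = true) ∧
      (∀ i j : Fin n, has r.img i j = true →
        has nd.S i j = true ∧ same nd.x nd.y i j = false) := by
  unfold checkRef at h
  split at h
  · simp at h
  · rename_i c hc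
    have h1 : ∀ i j : Fin n, _ := fun i j => allB_spec (allB_spec h i i.2) j j.2
    simp only [Bool.and_eq_true, Bool.or_eq_true, Bool.not_eq_true', Nat.beq_eq] at h1
    let t : Fin n → Fin n := fun i => ⟨pm n r.perm i, Nat.mod_lt _ hn⟩
    have ht : Function.Injective t := by
      intro i j hij
      have h2 : pm n r.perm i = pm n r.perm j := congrArg Fin.val hij
      rcases (h1 i j).1 with h3 | h3
      · exact Fin.ext h3
      · rw [h2] at h3
        have : Nat.beq (pm n r.perm j) (pm n r.perm j) = true := Nat.beq_refl _
        rw [this] at h3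
        cases h3
    refine ⟨c, List.mem_of_getElem? hc, Equiv.ofBijective t (Finite.injective_iff_bijective.mp ht),
      ?_, ?_, ?_⟩
    · intro i j hi
      rcases (h1 i j).2.1 with h3 | h3
      · rw [hi] at h3; cases h3
      · exact h3
    · intro i j hi
      rcases (h1 i j).2.2.1 with h3 | h3
      · rw [hi] at h3; cases h3
      · exact h3
    · intro i j hi
      rcases (h1 i j).2.2.2 with h3 | h3
      · rw [hi] at h3; cases h3
      · exact h3

theorem good_of_check {n : ℕ} {nd : Node} {rest : List Node}
    (h : checkNode n nd rest = true) (hrest : ∀ c ∈ rest, Good n c) : Good n nd := by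
  obtain ⟨B0, S0, x, y, refs⟩ := nd
  simp only [checkNode, Bool.and_eq_true, Nat.blt_eq] at h
  obtain ⟨⟨hxy, hyn, hS⟩, h⟩ := h
  have hn : 0 < n := by omega
  let X : Fin n := ⟨x, by omega⟩
  let Y : Fin n := ⟨y, hyn⟩
  have hXY : X ≠ Y := fun h0 => by
    have : x = y := congrArg Fin.val h0
    omega
  refine ⟨⟨X, Y, hXY, hS⟩, ?_⟩
  intro σ M B hB hM
  obtain ⟨hm1, hm2⟩ := hM X Y hS
  refine BreakerWins.breakerMove s(σ X, σ Y) (mem_board.mpr fun h0 => hXY (σ.injective h0))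
    hm1 hm2 ?_
  cases refs with
  | nil =>
    refine BreakerWins.block (blocked_spec h σ _ ?_)
    intro i j hij
    rw [Bool.or_eq_true] at hij
    rw [Finset.mem_insert]
    rcases hij with h1 | h1
    · exact Or.inr (hB i j h1)
    · exact Or.inl ((map_eq σ).mpr (same_spec (x := X) (y := Y) h1))
  | cons r rs =>
    simp only [Bool.and_eq_true] at h
    obtain ⟨h1, h2⟩ := h
    rw [List.all_eq_true] at h1
    -- facts about a reference
    have key : ∀ q ∈ r :: rs, ∃ c, Good n c ∧ ∃ τ : Equiv.Perm (Fin n),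
        (∀ i j : Fin n, has c.B i j = true →
          s((τ.trans σ) i, (τ.trans σ) j) ∈ insert s(σ X, σ Y) B) ∧
        (∀ i j : Fin n, has c.S i j = true → has q.img (τ i) (τ j) = true) ∧
        (∀ i j : Fin n, has c.S i j = true → s((τ.trans σ) i, (τ.trans σ) j) ∉ M ∧
          s((τ.trans σ) i, (τ.trans σ) j) ∉ insert s(σ X, σ Y) B) := by
      intro q hq
      obtain ⟨c, hc, τ, ha, hb, hd⟩ := checkRef_spec hn (h1 q hq)
      refine ⟨c, hrest c hc, τ, ?_, hb, ?_⟩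
      · intro i j hij
        rw [Finset.mem_insert]
        rcases ha i j hij with h3 | h3
        · exact Or.inr (hB _ _ h3)
        · exact Or.inl ((map_eq σ).mpr (same_spec (x := X) (y := Y) h3))
      · intro i j hij
        obtain ⟨h3, h4⟩ := hd _ _ (hb i j hij)
        obtain ⟨h5, h6⟩ := hM _ _ h3
        refine ⟨h5, ?_⟩
        rw [Finset.mem_insert, not_or]
        refine ⟨?_, h6⟩
        intro h7
        have h8 := same_of_eq ((map_eq σ).mp h7)
        change same x y _ _ = true at h8
        rw [h8] at h4
        cases h4
    obtain ⟨c0, hc0, τ0, _, _, hd0⟩ := key r (by simp)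
    obtain ⟨u, v, huv, huvS⟩ := hc0.1
    obtain ⟨hf1, hf2⟩ := hd0 u v huvS
    refine BreakerWins.makerMove _
      (mem_board.mpr fun h0 => huv ((τ0.trans σ).injective h0)) hf1 hf2 ?_
    intro f hfX hfM hfB
    induction f using Sym2.ind with
    | _ a' b' =>
    obtain ⟨a, rfl⟩ := σ.surjective a'
    obtain ⟨b, rfl⟩ := σ.surjective b'
    have h3 := allB_spec (allB_spec h2 a a.2) b b.2
    rw [List.any_eq_true] at h3
    obtain ⟨q, hq, h3⟩ := h3
    simp only [Bool.and_eq_true, Bool.not_eq_true'] at h3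
    obtain ⟨c, hc, τ, ha, hb, hd⟩ := key q hq
    refine hc.2 (τ.trans σ) _ _ ha ?_
    intro i j hij
    obtain ⟨h4, h5⟩ := hd i j hij
    refine ⟨?_, h5⟩
    rw [Finset.mem_insert, not_or]
    refine ⟨?_, h4⟩
    intro h6
    have h7 := (map_eq σ).mp h6
    have h8 := hb i j hij
    rcases Sym2.eq_iff.mp h7 with ⟨e1, e2⟩ | ⟨e1, e2⟩
    · rw [e1, e2, h3.1] at h8; cases h8
    · rw [e1, e2, h3.2] at h8; cases h8

theorem good_of_checkAll {n : ℕ} (l : List Node) (h : checkAll n l = true) :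
    ∀ c ∈ l, Good n c := by
  induction l with
  | nil => simp
  | cons nd rest ih =>
    simp only [checkAll, Bool.and_eq_true] at h
    have h1 := ih h.2
    intro c hc
    rcases List.mem_cons.mp hc with rfl | hc
    · exact good_of_check h.1 h1
    · exact h1 c hc

/-- The first node of a certificate is the position after Maker's first move `01`. -/
def checkRoot (n : ℕ) : List Node → Bool
  | [] => false
  | nd :: rest => (Nat.beq nd.B 0 && (!has nd.S 0 1 && !has nd.S 1 0)) &&
      checkAll n (nd :: rest)

theorem wins_of_checkRoot {n : ℕ} (hn : 2 ≤ n) (l : List Node) (h : checkRoot n l = true) :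
    BreakerWinsFirst (Board n) (HamCycles n) ∧ BreakerWinsSecond (Board n) (HamCycles n) := by
  cases l with
  | nil => cases h
  | cons nd rest =>
    simp only [checkRoot, Bool.and_eq_true, Nat.beq_eq, Bool.not_eq_true'] at h
    obtain ⟨⟨hB, h01, h10⟩, h⟩ := h
    have hg := good_of_checkAll _ h nd (by simp)
    have hB2 : ∀ i j, has nd.B i j = false := by
      intro i j
      rw [hB]
      simp only [has, Nat.zero_div, Nat.zero_mod]
      rfl
    let u : Fin n := ⟨0, by omega⟩
    let v : Fin n := ⟨1, by omega⟩
    have huv : u ≠ v := by simp [u, v]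
    constructor
    · refine hg.2 1 _ _ ?_ ?_
      · intro i j hij; rw [hB2] at hij; cases hij
      · intro i j _; simp
    · refine BreakerWins.makerMove s(u, v) (mem_board.mpr huv) (by simp) (by simp) ?_
      intro f hf _ _
      induction f using Sym2.ind with
      | _ a b =>
      have hab := mem_board.mp hf
      obtain ⟨σ, hσ⟩ : ∃ σ : Equiv.Perm (Fin n), σ u = a ∧ σ v = b := by
        refine ⟨(Equiv.swap u a).trans (Equiv.swap (Equiv.swap u a v) b), ?_, ?_⟩
        · simp only [Equiv.trans_apply, Equiv.swap_apply_left]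
          refine Equiv.swap_apply_of_ne_of_ne ?_ hab
          intro h0
          have : Equiv.swap u a u = Equiv.swap u a v := by rw [← h0]; simp
          exact huv ((Equiv.swap u a).injective this)
        · simp
      refine hg.2 σ _ _ ?_ ?_
      · intro i j hij; rw [hB2] at hij; cases hij
      · intro i j hij
        refine ⟨?_, by simp⟩
        simp only [Finset.mem_insert, Finset.notMem_empty, or_false]
        rw [← hσ.1, ← hσ.2, map_eq]
        intro h0
        rcases Sym2.eq_iff.mp h0 with ⟨rfl, rfl⟩ | ⟨rfl, rfl⟩
        · exact absurd (hij.symm.trans h01) (by simp)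
        · exact absurd (hij.symm.trans h10) (by simp)

/-- Strategy certificate for `n = 4`. -/
def cert4 : List Node := [
  ⟨0, 117966856, 1, 3, [⟨0, 1672, 16777224⟩,
    ⟨0, 1546, 67633152⟩]⟩,
  ⟨33556480, 16777224, 0, 3, []⟩]

/-- Strategy certificate for `n = 5`. -/
def cert5 : List Node := [
  ⟨0, 25872178176, 1, 2, [⟨0, 18056, 8691128320⟩,
    ⟨0, 14472, 25804412928⟩,
    ⟨0, 14416, 25838489600⟩,
    ⟨0, 18000, 17282107392⟩]⟩,
  ⟨132096, 8691128320, 1, 3, [⟨1, 18056, 8589938688⟩,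
    ⟨0, 18056, 67633152⟩]⟩,
  ⟨33688576, 67633152, 2, 3, []⟩,
  ⟨33688576, 8589938688, 1, 4, []⟩]

/-- Strategy certificate for `n = 6`. -/
def cert6 : List Node := [
  ⟨0, 29889601944636, 3, 4, [⟨0, 181896, 28755445300240⟩,
    ⟨0, 47125, 8826813881372⟩,
    ⟨0, 50730, 29854905940024⟩,
    ⟨0, 178312, 28751167110152⟩,
    ⟨0, 50709, 17759808986140⟩,
    ⟨0, 178305, 27647360436284⟩,
    ⟨0, 181889, 27655916818492⟩,
    ⟨0, 47146, 29837792655416⟩]⟩,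
  ⟨34628173824, 28755445300240, 1, 4, [⟨3, 181896, 17751100882960⟩,
    ⟨0, 181896, 28729606678544⟩,
    ⟨0, 181770, 28742492628992⟩,
    ⟨0, 83784, 21577206800⟩]⟩,
  ⟨43218112512, 28729606678544, 4, 5, [⟨3, 84505, 4294967312⟩,
    ⟨0, 181896, 10995686713344⟩]⟩,
  ⟨17772843110400, 10995686713344, 1, 5, [⟨0, 181896, 33556480⟩,
    ⟨0, 50856, 8796629893120⟩]⟩,
  ⟨19971866374144, 33556480, 1, 3, []⟩,
  ⟨43218112512, 17751100882960, 0, 4, [⟨0, 181896, 17180917760⟩,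
    ⟨0, 83784, 17729624997888⟩]⟩,
  ⟨47513079824, 17180917760, 2, 4, []⟩]

/-- Strategy certificate for `n = 7`. -/
def cert7 : List Node := [
  ⟨0, 17837855883361404, 2, 6, [⟨49, 1754753, 16711947348829308⟩,
    ⟨49, 1726081, 16709756915504252⟩,
    ⟨49, 1726088, 16710856443919444⟩,
    ⟨48, 1754760, 16694222052359276⟩,
    ⟨48, 1751176, 16703159325654132⟩,
    ⟨48, 1718920, 16711921327373428⟩,
    ⟨42, 1754760, 16711955972258936⟩,
    ⟨42, 706440, 16430480995613756⟩,
    ⟨42, 1754753, 16711955972192380⟩,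
    ⟨42, 706433, 16149006018886780⟩,
    ⟨0, 1754760, 16707557923716220⟩,
    ⟨0, 1726088, 16711938791406716⟩,
    ⟨0, 1693832, 16711955904691324⟩,
    ⟨0, 677768, 12208081467047036⟩,
    ⟨0, 645512, 14460155084897404⟩,
    ⟨0, 706440, 7634387973405820⟩]⟩,
  ⟨1125899911036928, 16707557923716220, 3, 6, [⟨50, 871297, 14453545094430828⟩,
    ⟨50, 859012, 14437962717293676⟩,
    ⟨45, 1716869, 5348364247587932⟩,
    ⟨50, 871304, 14454644622912576⟩,
    ⟨49, 858501, 14425932178873436⟩,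
    ⟨42, 1716869, 14170983524621336⟩,
    ⟨42, 1716365, 13889508547827804⟩,
    ⟨0, 1754760, 9951882531011708⟩]⟩,
  ⟨3377700798464000, 9951882531011708, 2, 3, [⟨54, 871304, 9930824237599816⟩,
    ⟨54, 871297, 9930824237533260⟩,
    ⟨38, 1754760, 9922044788689996⟩,
    ⟨54, 1005704, 571798442953740⟩,
    ⟨54, 1005697, 290323466226764⟩,
    ⟨38, 679112, 9930806790409292⟩,
    ⟨0, 1754760, 9951873839883388⟩,
    ⟨0, 1754753, 9951878151634020⟩]⟩,
  ⟨3377700866097152, 9951873839883388, 5, 6, [⟨38, 661416, 853221576884300⟩,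
    ⟨20, 1754760, 309156864263292⟩,
    ⟨14, 1754760, 874301545931880⟩,
    ⟨3, 1754760, 592826569286700⟩,
    ⟨2, 1754760, 874301529220196⟩,
    ⟨0, 1754760, 845580562809980⟩]⟩,
  ⟨12455268865015808, 845580562809980, 0, 6, [⟨61, 1414532, 562949953437696⟩,
    ⟨0, 1754760, 1155632661564⟩]⟩,
  ⟨12736743841726528, 1155632661564, 0, 2, [⟨58, 1693832, 16777224⟩,
    ⟨14, 1590505, 1155615818800⟩]⟩,
  ⟨12455268865015808, 874301529220196, 3, 5, [⟨1, 855393, 865487718343776⟩,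
    ⟨2, 957600, 302554945889380⟩,
    ⟨6, 957600, 847740646155364⟩,
    ⟨2, 953505, 584029922616356⟩,
    ⟨1, 957600, 845576251065444⟩,
    ⟨1, 953505, 846675762701380⟩,
    ⟨1, 859488, 865487718277220⟩]⟩,
  ⟨12455268865015808, 592826569286700, 3, 5, [⟨5, 1754760, 18880962692140⟩,
    ⟨1, 1754760, 583995311219756⟩,
    ⟨0, 1754760, 564101291131948⟩,
    ⟨1, 953505, 584029922616356⟩,
    ⟨0, 1656648, 584012758343724⟩,
    ⟨0, 1640268, 584029939195944⟩,
    ⟨0, 1738380, 580731404502028⟩]⟩,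
  ⟨12464065494908928, 564101291131948, 0, 3, [⟨57, 1754305, 34628173824⟩,
    ⟨13, 859460, 564066646180900⟩]⟩,
  ⟨12464065494908928, 583995311219756, 0, 2, [⟨7, 957600, 566265669379104⟩,
    ⟨1, 1754760, 21028176798760⟩,
    ⟨0, 1754760, 565166174528520⟩,
    ⟨4, 1754760, 18846334452776⟩,
    ⟨1, 1742496, 21045357584424⟩]⟩,
  ⟨12464065494974468, 565166174528520, 1, 2, [⟨55, 1688197, 17180917760⟩,
    ⟨21, 1738401, 565148993478664⟩]⟩,
  ⟨12464065494974468, 21028176798760, 0, 5, [⟨24, 969864, 16777224⟩,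
    ⟨0, 1754760, 19928648393728⟩]⟩,
  ⟨10213364119175204, 19928648393728, 1, 5, [⟨53, 1688386, 17729624997888⟩,
    ⟨22, 1644384, 132096⟩]⟩,
  ⟨12464065494908928, 18880962692140, 0, 2, [⟨25, 542605, 1134156578856⟩,
    ⟨3, 1754760, 18880945849376⟩,
    ⟨1, 1754760, 17781450998792⟩,
    ⟨0, 1754760, 18846334452776⟩]⟩,
  ⟨12464065494974468, 18846334452776, 2, 4, [⟨51, 1709701, 132096⟩,
    ⟨19, 969864, 18829153402920⟩]⟩,
  ⟨12464065494974468, 17781450998792, 3, 4, [⟨50, 1738961, 16777224⟩,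
    ⟨0, 1754760, 17746806047744⟩]⟩,
  ⟨12464100123148292, 17746806047744, 2, 4, [⟨49, 1709701, 132096⟩,
    ⟨23, 1742468, 17729624997888⟩]⟩,
  ⟨12464065494974468, 18880945849376, 2, 4, [⟨48, 1709701, 132096⟩,
    ⟨16, 953484, 18863764799520⟩]⟩,
  ⟨12455268865015808, 874301545931880, 1, 6, [⟨47, 1410444, 281474976710720⟩,
    ⟨0, 1754760, 29876615783464⟩]⟩,
  ⟨13018218818453504, 29876615783464, 3, 5, [⟨2, 1754760, 21062788195360⟩,
    ⟨1, 1754760, 2250849264648⟩,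
    ⟨2, 1738380, 21028176798760⟩,
    ⟨0, 1754760, 19980474130440⟩,
    ⟨0, 1656648, 17781450998792⟩]⟩,
  ⟨13027015448346624, 19980474130440, 3, 4, [⟨45, 1738961, 16777224⟩,
    ⟨8, 923013, 19945829179392⟩]⟩,
  ⟨13027015448346624, 2250849264648, 1, 2, [⟨18, 969857, 2199023263744⟩,
    ⟨1, 1688680, 51825868808⟩]⟩,
  ⟨13027015448346624, 21062788195360, 1, 5, [⟨17, 871745, 132096⟩,
    ⟨0, 1754760, 18863764799520⟩]⟩,
  ⟨13029214471610368, 18863764799520, 4, 5, [⟨42, 1705802, 1099511627808⟩,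
    ⟨9, 1656641, 34628173824⟩]⟩,
  ⟨12455268865015808, 309156864263292, 0, 2, [⟨13, 1754760, 291405763182696⟩,
    ⟨12, 1754760, 281526802711624⟩,
    ⟨5, 1754760, 309152552453216⟩,
    ⟨2, 1754760, 291392611026040⟩,
    ⟨0, 1754760, 27677592519720⟩]⟩,
  ⟨12455268865081348, 27677592519720, 2, 4, [⟨40, 1709701, 132096⟩,
    ⟨0, 1754760, 27660411469864⟩]⟩,
  ⟨12455286045999108, 27660411469864, 3, 5, [⟨12, 542605, 1134156578856⟩,
    ⟨7, 953484, 18863764799520⟩,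
    ⟨12, 657293, 17764269948936⟩,
    ⟨7, 969864, 18829153402920⟩]⟩,
  ⟨12455268865081348, 291392611026040, 2, 4, [⟨38, 1709701, 132096⟩,
    ⟨0, 1754760, 291375429976184⟩]⟩,
  ⟨12455286045999108, 291375429976184, 0, 6, [⟨35, 1693832, 16777224⟩,
    ⟨0, 1754760, 9900436488240⟩]⟩,
  ⟨12736761022709828, 9900436488240, 0, 5, [⟨10, 183435, 8796629893120⟩,
    ⟨3, 1753227, 4294967312⟩]⟩,
  ⟨12455268865081348, 309152552453216, 2, 4, [⟨35, 1709701, 132096⟩,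
    ⟨0, 1754760, 309135371403360⟩]⟩,
  ⟨12455286045999108, 309135371403360, 3, 5, [⟨2, 1754760, 300304113336416⟩,
    ⟨0, 1754760, 282609116512352⟩,
    ⟨0, 953484, 299239229882432⟩,
    ⟨2, 953484, 18863764799520⟩]⟩,
  ⟨12464082675892228, 282609116512352, 0, 6, [⟨7, 969864, 1099511627808⟩,
    ⟨0, 1754760, 34628173824⟩]⟩,
  ⟨12745557652602948, 34628173824, 3, 4, []⟩,
  ⟨12464082675892228, 300304113336416, 0, 5, [⟨1, 1754760, 281474976710720⟩,
    ⟨0, 1754760, 17729624997888⟩]⟩,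
  ⟨10213381300092964, 17729624997888, 4, 5, []⟩,
  ⟨12465165006602276, 281474976710720, 0, 6, []⟩,
  ⟨3377700866162692, 281526802711624, 0, 3, [⟨26, 1005704, 281474976710720⟩,
    ⟨21, 1005697, 51809223680⟩]⟩,
  ⟨12455268865081348, 291405763182696, 0, 3, [⟨25, 1005704, 281474976710720⟩,
    ⟨0, 1754760, 9930769694752⟩]⟩,
  ⟨12455268881858572, 9930769694752, 3, 5, [⟨26, 1754305, 34628173824⟩,
    ⟨0, 1754760, 1099511627808⟩]⟩,
  ⟨12464065511751692, 1099511627808, 0, 5, []⟩,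
  ⟨3377700866097152, 9922044788689996, 1, 2, [⟨16, 743624, 563001812862984⟩,
    ⟨0, 1754760, 281492208027724⟩,
    ⟨16, 639373, 9921992962689092⟩,
    ⟨0, 969864, 844442127908940⟩]⟩,
  ⟨3377700866229248, 281492208027724, 0, 2, [⟨23, 1688197, 17180917760⟩,
    ⟨12, 839860, 281475027044424⟩]⟩,
  ⟨1125899911036928, 16711955972258936, 4, 6, [⟨8, 676760, 12198172423777344⟩,
    ⟨8, 677768, 12204743992171584⟩,
    ⟨3, 1754760, 11925502633341952⟩,
    ⟨7, 1136520, 12204761439427648⟩,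
    ⟨8, 670600, 12189247985054784⟩,
    ⟨0, 1754760, 11645131463078000⟩,
    ⟨0, 1688232, 3122816884563032⟩,
    ⟨0, 1753752, 9956280461587568⟩]⟩,
  ⟨5629774416314368, 11645131463078000, 5, 6, [⟨8, 1443225, 2564234863444032⟩,
    ⟨1, 1754760, 2556524525256816⟩,
    ⟨3, 1754760, 2282777067651072⟩,
    ⟨8, 690585, 2546522419363904⟩,
    ⟨8, 1213849, 2559853995753536⟩,
    ⟨0, 1754760, 315762509099120⟩]⟩,
  ⟨14707342415233024, 315762509099120, 4, 5, [⟨17, 1454978, 16510394310688⟩,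
    ⟨17, 1225602, 4462742605840⟩,
    ⟨11, 1255233, 293634835492976⟩,
    ⟨11, 1517313, 298015703183472⟩]⟩,
  ⟨14707342415233024, 2556524525256816, 0, 6, [⟨19, 1455489, 2251800887427072⟩,
    ⟨7, 1388961, 23248661119024⟩]⟩,
  ⟨5629774416314368, 11925502633341952, 5, 6, [⟨5, 702856, 2821373683725312⟩,
    ⟨5, 1447320, 2845709840171008⟩,
    ⟨5, 1226120, 2834705260114944⟩,
    ⟨0, 1754760, 2282777067651072⟩,
    ⟨0, 1753752, 587302421296128⟩]⟩,
  ⟨14707342415233024, 2282777067651072, 3, 6, [⟨5, 1447824, 30941552050176⟩,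
    ⟨5, 1218448, 22179550330880⟩,
    ⟨5, 1447320, 30958999306240⟩,
    ⟨5, 1414560, 30976112590848⟩,
    ⟨5, 1217944, 26578131615744⟩,
    ⟨5, 956816, 13246555226112⟩]⟩,
  ⟨1125899911036928, 16694222052359276, 2, 3, [⟨6, 1677984, 16690914859763788⟩,
    ⟨2, 1692320, 16411647446053892⟩,
    ⟨2, 1677956, 12181507631443052⟩,
    ⟨6, 1693832, 16686516811287628⟩,
    ⟨1, 1692320, 14159846592183300⟩,
    ⟨6, 1673889, 16690914859830344⟩,
    ⟨2, 1004192, 15848697526172676⟩,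
    ⟨6, 1690248, 16690897678978124⟩,
    ⟨2, 989828, 3112736262417516⟩]⟩,
  ⟨1125899911036928, 16711951660579940, 2, 5, [⟨5, 1754760, 16707493179384932⟩,
    ⟨1, 1754760, 16416173903801348⟩,
    ⟨5, 1738905, 16707510360237152⟩,
    ⟨1, 1753752, 16422745472195588⟩,
    ⟨1, 1521800, 11921104584799236⟩,
    ⟨5, 1751176, 16707510292669540⟩,
    ⟨0, 1754760, 7347402534775812⟩,
    ⟨1, 1751176, 16407249465078788⟩,
    ⟨1, 1524376, 15861994542021636⟩,
    ⟨5, 1743000, 16707510360170596⟩,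
    ⟨1, 1525384, 14173169646267396⟩]⟩,
  ⟨1130297959645184, 7347402534775812, 2, 3, [⟨13, 1754760, 17181115396⟩,
    ⟨1, 1002120, 2825763708627968⟩,
    ⟨1, 985740, 2825746527775748⟩,
    ⟨1, 985761, 6782253456752644⟩]⟩,
  ⟨1130297959645184, 16416173903801348, 2, 3, [⟨12, 1754760, 17181115396⟩,
    ⟨0, 1754760, 11894535077653504⟩,
    ⟨0, 1738380, 11894517896801284⟩,
    ⟨0, 1738401, 15851024825778180⟩]⟩,
  ⟨1130298027278336, 11894535077653504, 1, 2, [⟨12, 1754760, 17180917760⟩,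
    ⟨0, 1754760, 11894517896603648⟩]⟩,
  ⟨1130298027410432, 11894517896603648, 1, 6, [⟨0, 1754760, 11329368919902208⟩,
    ⟨0, 1690248, 11331567909609472⟩,
    ⟨0, 444080, 2253999944247296⟩,
    ⟨0, 379568, 9079767055738880⟩]⟩,
  ⟨1693247980848128, 11329368919902208, 3, 6, [⟨8, 1693825, 33556480⟩,
    ⟨4, 1690248, 9077567998918656⟩]⟩,
  ⟨1130297959645184, 16707493179384932, 5, 6, [⟨4, 1754760, 7629925180334180⟩,
    ⟨0, 1754760, 7602299413947460⟩,
    ⟨0, 1656648, 7612195487769696⟩,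
    ⟨0, 1525384, 592774811051044⟩,
    ⟨0, 1524376, 2281625745040420⟩,
    ⟨0, 1753752, 7608897020576836⟩]⟩,
  ⟨10207865958563840, 7602299413947460, 1, 6, [⟨7, 1393560, 7037150369415232⟩,
    ⟨0, 1754760, 2253999978521604⟩,
    ⟨0, 1753227, 283674067805252⟩]⟩,
  ⟨10770815912001536, 2253999978521604, 1, 2, [⟨5, 1754753, 2199023263744⟩,
    ⟨0, 1754760, 2251800955125764⟩]⟩,
  ⟨10770815912133632, 2251800955125764, 2, 3, [⟨6, 1738380, 65540⟩,
    ⟨0, 1754760, 2251800887427072⟩]⟩,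
  ⟨10770815979766784, 2251800887427072, 3, 6, []⟩,
  ⟨10207865958563840, 7629925180334180, 1, 5, [⟨3, 1655640, 27625766518816⟩,
    ⟨0, 1754760, 7618929459544164⟩,
    ⟨0, 1753227, 7626626645377088⟩,
    ⟨0, 1751176, 7609996464439396⟩]⟩,
  ⟨10210064981827584, 7618929459544164, 0, 5, [⟨3, 1655619, 17729624997888⟩,
    ⟨0, 1656648, 7600100322918468⟩]⟩,
  ⟨10207865958629380, 7601199834480736, 0, 6, [⟨1, 1393049, 7318625346142208⟩,
    ⟨0, 1754760, 1099511627808⟩]⟩,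
  ⟨10489340935340100, 1099511627808, 0, 5, []⟩,
  ⟨1130298027278336, 17181115396, 1, 2, [⟨0, 1754760, 17180917760⟩,
    ⟨0, 1738380, 65540⟩]⟩,
  ⟨1130298027410432, 17180917760, 2, 4, []⟩]

theorem check4 : checkRoot 4 cert4 = true := by decide +kernel

theorem check5 : checkRoot 5 cert5 = true := by decide +kernel

theorem check6 : checkRoot 6 cert6 = true := by decide +kernel

theorem check7 : checkRoot 7 cert7 = true := by decide +kernel

end HamGame

/-- In the Maker-Breaker Hamiltonicity game on `E(K_n)` with `4 ≤ n ≤ 7`, Breaker has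
a winning strategy regardless of who moves first. -/
theorem breaker_wins_small_hamiltonicity (n : ℕ) (h4 : 4 ≤ n) (h7 : n ≤ 7) :
    BreakerWinsFirst (Board n) (HamCycles n) ∧ BreakerWinsSecond (Board n) (HamCycles n) := by
  interval_cases n
  · exact HamGame.wins_of_checkRoot (by norm_num) _ HamGame.check4
  · exact HamGame.wins_of_checkRoot (by norm_num) _ HamGame.check5
  · exact HamGame.wins_of_checkRoot (by norm_num) _ HamGame.check6
  · exact HamGame.wins_of_checkRoot (by norm_num) _ HamGame.check7
end
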